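/- arXiv:1103.6102 — 2 statements merged into one kernel-verified Lean document; each statement's English description precedes it below -/
import Mathlib

section
/- Let N, n ≥ 2 and let E = {ξ_1,…,ξ_m} ⊂ ℝ^{N×n} be a finite set such that dist(ξ; B_{1/2}(0)) > 0 for every ξ ∈ E, and suppose that for every ξ ∈ E there is a set M_ξ ⊂ ℝ^{N×n} with: (i) M_ξ ⊂ ξ + {μ ∈ ℝ^{N×n} : rank μ = 1}; (ii) M_ξ ⊂ B_{1/2}(0) and #M_ξ < 4Nn; (iii) ∂B_{1/2}(0) ⊂ ⋃_{ξ∈E} int(co({ξ} ∪ M_ξ)). Then the open bounded set K := B_{1/2}(0) ∪ ⋃_{ξ∈E} int(co({ξ} ∪ M_ξ)) has the relaxation property with respect to E. -/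
open MeasureTheory Filter

attribute [local instance] Classical.propDecidable
attribute [local instance] Matrix.frobeniusNormedAddCommGroup Matrix.frobeniusNormedSpace

noncomputable section

/-- The space of real `N × n` matrices. -/
abbrev Mat (N n : ℕ) : Type := Matrix (Fin N) (Fin n) ℝ

/-- A function `f : ℝ^{N×n} → ℝ` is rank one convex. -/
def RankOneConvexFun {N n : ℕ} (f : Mat N n → ℝ) : Prop :=
  ∀ lam ∈ Set.Icc (0:ℝ) 1, ∀ ξ η : Mat N n, (ξ - η).rank = 1 →
    f (lam • ξ + (1 - lam) • η) ≤ lam * f ξ + (1 - lam) * f η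

/-- The hull `Rco_f E`. -/
def RcoF {N n : ℕ} (E : Set (Mat N n)) : Set (Mat N n) :=
  {ξ | ∀ f : Mat N n → ℝ, RankOneConvexFun f → (∀ η ∈ E, f η ≤ 0) → f ξ ≤ 0}

/-- A set of matrices is rank one convex. -/
def RankOneConvexSet {N n : ℕ} (S : Set (Mat N n)) : Prop :=
  ∀ A ∈ S, ∀ B ∈ S, (A - B).rank = 1 → ∀ t ∈ Set.Icc (0:ℝ) 1, t • A + (1 - t) • B ∈ S

/-- The property `(H_I(U))`, phrased on lists of (weight, matrix) pairs. -/
inductive HIProp {N n : ℕ} (U : Set (Mat N n)) : List (ℝ × Mat N n) → Prop where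
  | single (l : ℝ) (ξ : Mat N n) (hξ : ξ ∈ U) : HIProp U [(l, ξ)]
  | pair (l₁ l₂ : ℝ) (ξ₁ ξ₂ : Mat N n) (h₁ : ξ₁ ∈ U) (h₂ : ξ₂ ∈ U)
      (hrank : (ξ₁ - ξ₂).rank = 1) : HIProp U [(l₁, ξ₁), (l₂, ξ₂)]
  | step (L rest : List (ℝ × Mat N n)) (l₁ l₂ : ℝ) (ξ₁ ξ₂ : Mat N n)
      (hperm : L.Perm ((l₁, ξ₁) :: (l₂, ξ₂) :: rest)) (hrest : rest ≠ [])
      (h₁ : ξ₁ ∈ U) (h₂ : ξ₂ ∈ U) (hrank : (ξ₁ - ξ₂).rank = 1)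
      (hrec : HIProp U ((l₁ + l₂, ((l₁ + l₂)⁻¹) • (l₁ • ξ₁ + l₂ • ξ₂)) :: rest)) :
      HIProp U L

/-- The family `(λ_i, ξ_i)_{1 ≤ i ≤ I}` satisfies `(H_I(U))`. -/
def SatisfiesH {N n : ℕ} (U : Set (Mat N n)) (I : ℕ) (l : Fin I → ℝ)
    (ξ : Fin I → Mat N n) : Prop :=
  HIProp U (List.ofFn fun i => (l i, ξ i))

/-- The gradient of a map `u : ℝ^n → ℝ^N`, as an `N × n` matrix. -/
def matGrad {N n : ℕ} (u : (Fin n → ℝ) → Fin N → ℝ) (x : Fin n → ℝ) : Mat N n :=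
  LinearMap.toMatrix' (fderiv ℝ u x).toLinearMap

/-- `u` is affine on the set `s`. -/
def AffineOn {N n : ℕ} (u : (Fin n → ℝ) → Fin N → ℝ) (s : Set (Fin n → ℝ)) : Prop :=
  ∃ (A : Mat N n) (b : Fin N → ℝ), ∀ x ∈ s, u x = A.mulVec x + b

/-- `u` is piecewise affine on the open set `Ω`. -/
def PiecewiseAffineOn {N n : ℕ} (u : (Fin n → ℝ) → Fin N → ℝ)
    (Ω : Set (Fin n → ℝ)) : Prop :=
  ContinuousOn u (closure Ω) ∧
  ∃ P : ℕ → Set (Fin n → ℝ),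
    (∀ k, IsOpen (P k)) ∧ (∀ k, P k ⊆ Ω) ∧
    (∀ k l, k ≠ l → Disjoint (P k) (P l)) ∧
    volume (Ω \ ⋃ k, P k) = 0 ∧ ∀ k, AffineOn u (P k)

/-- `u` is piecewise `C¹` on the open set `Ω`. -/
def PiecewiseC1On {N n : ℕ} (u : (Fin n → ℝ) → Fin N → ℝ)
    (Ω : Set (Fin n → ℝ)) : Prop :=
  ContinuousOn u (closure Ω) ∧
  ∃ P : ℕ → Set (Fin n → ℝ),
    (∀ k, IsOpen (P k)) ∧ (∀ k, P k ⊆ Ω) ∧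
    (∀ k l, k ≠ l → Disjoint (P k) (P l)) ∧
    volume (Ω \ ⋃ k, P k) = 0 ∧ ∀ k, ContDiffOn ℝ 1 u (P k)

/-- `u ∈ φ + W₀^{1,∞}(Ω; ℝ^N)`: `u` is Lipschitz on `closure Ω` and agrees with `φ`
on the boundary of `Ω`. -/
def MemW01inf {N n : ℕ} (Ω : Set (Fin n → ℝ)) (φ u : (Fin n → ℝ) → Fin N → ℝ) : Prop :=
  (∃ C : NNReal, LipschitzOnWith C u (closure Ω)) ∧ ∀ x ∈ frontier Ω, u x = φ x

/-- `K` has the relaxation property with respect to `E`. -/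
def HasRelaxationProperty {N n : ℕ} (K E : Set (Mat N n)) : Prop :=
  ∀ Ω : Set (Fin n → ℝ), IsOpen Ω → Bornology.IsBounded Ω →
    ∀ ξ ∈ K, ∀ b : Fin N → ℝ,
      ∃ u : ℕ → (Fin n → ℝ) → Fin N → ℝ,
        (∀ ν, PiecewiseAffineOn (u ν) Ω) ∧
        (∀ ν, MemW01inf Ω (fun x => ξ.mulVec x + b) (u ν)) ∧
        (∀ ν, ∀ᵐ x ∂(volume.restrict Ω), matGrad (u ν) x ∈ E ∪ K) ∧
        (∃ C : NNReal, ∀ ν, LipschitzOnWith C (u ν) (closure Ω)) ∧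
        TendstoUniformlyOn u (fun x => ξ.mulVec x + b) atTop (closure Ω) ∧
        Tendsto (fun ν => ∫ x in Ω, Metric.infDist (matGrad (u ν) x) E) atTop (nhds 0)

/-- The singular values of a square matrix, in nondecreasing order:
the square roots of the eigenvalues of `ξ ξᵀ`, sorted. -/
def singularValues {n : ℕ} (ξ : Matrix (Fin n) (Fin n) ℝ) (i : Fin n) : ℝ :=
  Real.sqrt ((Matrix.isHermitian_mul_conjTranspose_self ξ).eigenvalues
    (Tuple.sort (Matrix.isHermitian_mul_conjTranspose_self ξ).eigenvalues i))

end

/-!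
Let `Q ξ` be the least average distance to `E` among the gradients of piecewise affine maps on the
unit ball with boundary values `x ↦ ξ x` and gradients in `K`. If `Q ξ = 0`, filling `Ω` with
disjoint small rescaled copies of nearly optimal maps gives the required sequence, so it suffices to
show that `Q` vanishes on `K`. Lamination makes `Q` convex on `K` in rank-one directions, and `Q` is
at most the distance to `E`.

Suppose `Q ≤ c` on the sphere; rank-one lines extend this to the ball. A point `η` of the sphere
lies in the interior of some `co ({ξ} ∪ M_ξ)`, so `η = t ξ + (1 - t) y` with `y ∈ co M_ξ`, and
splitting off the points of `M_ξ` one at a time gives `Q η ≤ t Q ξ + (1 - t) c = (1 - t) c`, up to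
a small contraction towards `η` because `ξ` itself need not lie in `K`. As `M_ξ` lies in the open
ball, `t` stays away from `0`, and by compactness `Q ≤ θ c` on the sphere with a single `θ < 1`. For
the supremum `c` of `Q` on the sphere this means `c ≤ θ c`, so `Q` vanishes on the sphere and the
ball, and the same estimate with `c = 0` covers the rest of `K`.
-/

section AffineGerms

open Metric Set Topology

variable {V W : Type*} [NormedAddCommGroup V] [NormedSpace ℝ V]
  [NormedAddCommGroup W] [NormedSpace ℝ W]

/-- `f` coincides near `x` with an affine map of linear part `A`. -/
def HasAffineGermAt (f : V → W) (A : V →L[ℝ] W) (x : V) : Prop :=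
  ∃ b : W, f =ᶠ[𝓝 x] fun y => A y + b

namespace HasAffineGermAt

variable {f g : V → W} {A B : V →L[ℝ] W} {x : V}

theorem hasFDerivAt (h : HasAffineGermAt f A x) : HasFDerivAt f A x := by
  obtain ⟨b, hb⟩ := h
  exact (A.hasFDerivAt.add_const b).congr_of_eventuallyEq hb

theorem fderiv_eq (h : HasAffineGermAt f A x) : fderiv ℝ f x = A :=
  h.hasFDerivAt.fderiv

theorem eventually (h : HasAffineGermAt f A x) : ∀ᶠ y in 𝓝 x, HasAffineGermAt f A y := by
  obtain ⟨b, hb⟩ := h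
  exact hb.eventually_nhds.mono fun y hy => ⟨b, hy⟩

theorem congr (h : HasAffineGermAt f A x) (hg : g =ᶠ[𝓝 x] f) : HasAffineGermAt g A x := by
  obtain ⟨b, hb⟩ := h
  exact ⟨b, hg.trans hb⟩

theorem of_affine (A : V →L[ℝ] W) (b : W) (x : V) : HasAffineGermAt (fun y => A y + b) A x :=
  ⟨b, EventuallyEq.rfl⟩

theorem of_eventually_eq_zero (h : f =ᶠ[𝓝 x] 0) : HasAffineGermAt f 0 x :=
  ⟨0, h.trans (EventuallyEq.of_eq (by ext; simp))⟩

theorem add (hf : HasAffineGermAt f A x) (hg : HasAffineGermAt g B x) :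
    HasAffineGermAt (f + g) (A + B) x := by
  obtain ⟨b, hb⟩ := hf
  obtain ⟨c, hc⟩ := hg
  refine ⟨b + c, ?_⟩
  filter_upwards [hb, hc] with y hy hy'
  rw [Pi.add_apply, hy, hy', add_apply]
  abel

theorem const_smul_add_const (hf : HasAffineGermAt f A x) (a : ℝ) (c : W) :
    HasAffineGermAt (fun y => a • f y + c) (a • A) x := by
  obtain ⟨b, hb⟩ := hf
  refine ⟨a • b + c, ?_⟩
  filter_upwards [hb] with y hy
  rw [hy, smul_add, add_assoc, smul_apply]

theorem smul_const {f : V → ℝ} {φ : V →L[ℝ] ℝ} (hf : HasAffineGermAt f φ x) (a : W) :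
    HasAffineGermAt (fun y => f y • a) (φ.smulRight a) x := by
  obtain ⟨b, hb⟩ := hf
  refine ⟨b • a, ?_⟩
  filter_upwards [hb] with y hy
  rw [hy, add_smul, ContinuousLinearMap.smulRight_apply]

theorem rescale {r : ℝ} (hr : r ≠ 0) {z : V} (h : HasAffineGermAt f A (r⁻¹ • (z - x))) :
    HasAffineGermAt (fun y => r • f (r⁻¹ • (y - x))) A z := by
  obtain ⟨b, hb⟩ := h
  refine ⟨r • b - A x, ?_⟩
  have hcont : Continuous fun y : V => r⁻¹ • (y - x) := by fun_prop
  filter_upwards [hcont.continuousAt.eventually hb] with y hy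
  rw [hy, smul_add, map_smul, smul_inv_smul₀ hr, map_sub]
  abel

end HasAffineGermAt

/-- The open set of points near which `f` is affine with linear part `A`. -/
def affineRegion (f : V → W) (A : V →L[ℝ] W) : Set V :=
  {x | HasAffineGermAt f A x}

theorem isOpen_affineRegion (f : V → W) (A : V →L[ℝ] W) : IsOpen (affineRegion f A) :=
  isOpen_iff_mem_nhds.2 fun _ hx => HasAffineGermAt.eventually hx

theorem disjoint_affineRegion {A B : V →L[ℝ] W} (f : V → W) (hAB : A ≠ B) :
    Disjoint (affineRegion f A) (affineRegion f B) :=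
  disjoint_left.2 fun _ hA hB => hAB (HasAffineGermAt.fderiv_eq hA ▸ HasAffineGermAt.fderiv_eq hB)

end AffineGerms

section LipschitzBounds

open Metric Set Topology
open scoped NNReal

variable {V W : Type*} [NormedAddCommGroup V] [NormedSpace ℝ V] [NormedAddCommGroup W]
  [NormedSpace ℝ W]

theorem abs_add_sub_le_of_ae_abs_lineDeriv_line_le {C : ℝ≥0} {f : V → ℝ}
    (hf : LipschitzWith C f) {x v : V} {c : ℝ}
    (h : ∀ᵐ s : ℝ, |lineDeriv ℝ f (x + s • v) v| ≤ c) : |f (x + v) - f x| ≤ c := by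
  set g : ℝ → ℝ := fun s => f (x + s • v)
  have hderiv (s : ℝ) : deriv g s = lineDeriv ℝ f (x + s • v) v := by
    have hshift : (fun τ : ℝ => f (x + s • v + τ • v)) = fun τ => g (s + τ) := by
      funext τ
      simp only [g, add_smul, add_assoc]
    rw [lineDeriv, hshift, deriv_comp_const_add, add_zero]
  have hline : LipschitzWith ‖v‖₊ fun s : ℝ => x + s • v :=
    LipschitzWith.of_dist_le_mul fun s s' => by
      rw [dist_add_left, dist_eq_norm, ← sub_smul, norm_smul, coe_nnnorm, mul_comm, dist_eq_norm]
  have hac : AbsolutelyContinuousOnInterval g 0 1 :=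
    ((hf.comp hline).lipschitzOnWith (s := uIcc 0 1)).absolutelyContinuousOnInterval
  have h_int : ‖∫ s in (0 : ℝ)..1, deriv g s‖ ≤ c * |1 - 0| := by
    refine intervalIntegral.norm_integral_le_of_norm_le_const_ae ?_
    filter_upwards [h] with s hs _
    rwa [hderiv]
  simpa [hac.integral_deriv_eq_sub, g] using h_int

variable [FiniteDimensional ℝ V] [MeasurableSpace V] [BorelSpace V]
  {μ : Measure V} [μ.IsAddHaarMeasure]

theorem abs_add_sub_le_of_ae_abs_lineDeriv_le {C : ℝ≥0} {f : V → ℝ} (hf : LipschitzWith C f)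
    {v : V} {c : ℝ} (h : ∀ᵐ x ∂μ, |lineDeriv ℝ f x v| ≤ c) (x : V) :
    |f (x + v) - f x| ≤ c := by
  have hmeas : MeasurableSet {p : V × ℝ | |lineDeriv ℝ f (p.1 + p.2 • v) v| ≤ c} :=
    measurableSet_le ((measurable_lineDeriv hf.continuous).comp (by fun_prop)).abs measurable_const
  have hlines : ∀ᵐ x ∂μ, ∀ᵐ s : ℝ, |lineDeriv ℝ f (x + s • v) v| ≤ c :=
    (Measure.ae_ae_comm hmeas).2 <| Eventually.of_forall fun s =>
      (measurePreserving_add_right μ (s • v)).quasiMeasurePreserving.ae h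
  have hdense : Dense {x | |f (x + v) - f x| ≤ c} := Measure.dense_of_ae <|
    hlines.mono fun x => abs_add_sub_le_of_ae_abs_lineDeriv_line_le hf
  have hcont : Continuous f := hf.continuous
  have hclosed : IsClosed {x | |f (x + v) - f x| ≤ c} :=
    isClosed_le (by fun_prop) continuous_const
  exact hclosed.closure_subset (hdense x)

theorem lipschitzWith_of_ae_norm_fderiv_le [FiniteDimensional ℝ W] {C R : ℝ≥0} {f : V → W}
    (hf : LipschitzWith C f) (h : ∀ᵐ x ∂μ, ‖fderiv ℝ f x‖ ≤ R) : LipschitzWith R f := by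
  refine LipschitzWith.of_dist_le_mul fun x y => ?_
  rw [dist_eq_norm, dist_eq_norm]
  refine NormedSpace.norm_le_dual_bound ℝ _ (by positivity) fun φ => ?_
  have hline : ∀ᵐ z ∂μ, |lineDeriv ℝ (φ ∘ f) z (x - y)| ≤ R * ‖x - y‖ * ‖φ‖ := by
    filter_upwards [h, hf.ae_differentiableAt] with z hz hdiff
    rw [((φ.hasFDerivAt.comp z hdiff.hasFDerivAt).hasLineDerivAt (x - y)).lineDeriv,
      ← Real.norm_eq_abs, mul_comm]
    exact φ.le_opNorm_of_le ((fderiv ℝ f z).le_of_opNorm_le hz _)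
  simpa using abs_add_sub_le_of_ae_abs_lineDeriv_le (φ.lipschitz.comp hf) hline y

end LipschitzBounds

section PiecewiseAffine

open Metric Set Topology
open scoped NNReal

variable {V W : Type*} [NormedAddCommGroup V] [NormedSpace ℝ V] [MeasurableSpace V]
  [NormedAddCommGroup W] [NormedSpace ℝ W] {μ : Measure V}

/-- Lipschitz functions that are, near almost every point, affine with linear part in `Γ`. -/
structure IsPiecewiseAffine (μ : Measure V) (Γ : Set (V →L[ℝ] W)) (f : V → W) : Prop where
  lipschitz : ∃ C, LipschitzWith C f
  ae_germ : ∀ᵐ x ∂μ, ∃ A ∈ Γ, HasAffineGermAt f A x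

namespace IsPiecewiseAffine

variable {Γ Γ' : Set (V →L[ℝ] W)} {f : V → W}

theorem mono (hf : IsPiecewiseAffine μ Γ f) (h : Γ ⊆ Γ') : IsPiecewiseAffine μ Γ' f :=
  ⟨hf.lipschitz, hf.ae_germ.mono fun _ ⟨A, hA, hx⟩ => ⟨A, h hA, hx⟩⟩

theorem ae_fderiv_mem (hf : IsPiecewiseAffine μ Γ f) : ∀ᵐ x ∂μ, fderiv ℝ f x ∈ Γ :=
  hf.ae_germ.mono fun _ ⟨_, hA, hx⟩ => hx.fderiv_eq ▸ hA

theorem restrict (hf : IsPiecewiseAffine μ Γ f) (G : Set V) :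
    IsPiecewiseAffine (μ.restrict G) Γ f :=
  ⟨hf.lipschitz, ae_restrict_of_ae hf.ae_germ⟩

theorem of_affine {A : V →L[ℝ] W} (hA : A ∈ Γ) (b : W) :
    IsPiecewiseAffine μ Γ fun x => A x + b :=
  ⟨⟨_, A.lipschitz.add (LipschitzWith.const b)⟩,
    Eventually.of_forall fun x => ⟨A, hA, .of_affine A b x⟩⟩

theorem const_smul_add_const (hf : IsPiecewiseAffine μ Γ f) {a : ℝ}
    (hΓ : ∀ A ∈ Γ, a • A ∈ Γ') (c : W) : IsPiecewiseAffine μ Γ' fun x => a • f x + c := by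
  obtain ⟨⟨C, hC⟩, hgerm⟩ := hf
  exact ⟨⟨_, ((lipschitzWith_smul a).comp hC).add (LipschitzWith.const c)⟩,
    hgerm.mono fun x ⟨A, hA, hx⟩ => ⟨a • A, hΓ A hA, hx.const_smul_add_const a c⟩⟩

theorem affine_add {A : V →L[ℝ] W} (hf : IsPiecewiseAffine μ {B | A + B ∈ Γ} f) (b : W) :
    IsPiecewiseAffine μ Γ fun x => A x + b + f x := by
  obtain ⟨⟨C, hC⟩, hgerm⟩ := hf
  exact ⟨⟨_, (A.lipschitz.add (LipschitzWith.const b)).add hC⟩,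
    hgerm.mono fun x ⟨B, hB, hx⟩ => ⟨A + B, hB, (HasAffineGermAt.of_affine A b x).add hx⟩⟩

section Real

variable [FiniteDimensional ℝ V] [BorelSpace V] [μ.IsAddHaarMeasure]
  {Γ : Set (V →L[ℝ] ℝ)} {f g : V → ℝ}

/- Where `f = g`, both `max f g - f` and `max f g - g` have a minimum, so wherever `max f g` is
differentiable the two germs coincide. -/
protected theorem max (hf : IsPiecewiseAffine μ Γ f) (hg : IsPiecewiseAffine μ Γ g) :
    IsPiecewiseAffine μ Γ fun x => max (f x) (g x) := by
  obtain ⟨⟨C, hC⟩, hf⟩ := hf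
  obtain ⟨⟨D, hD⟩, hg⟩ := hg
  refine ⟨⟨_, hC.max hD⟩, ?_⟩
  filter_upwards [hf, hg, (hC.max hD).ae_differentiableAt] with x ⟨A, hA, hfA⟩ ⟨B, hB, hgB⟩ hdiff
  rcases lt_trichotomy (f x) (g x) with h | h | h
  · refine ⟨B, hB, hgB.congr ?_⟩
    filter_upwards [hC.continuous.continuousAt.eventually_lt hD.continuous.continuousAt h] with y hy
    exact max_eq_right hy.le
  · have hminA : IsLocalMin (fun y => max (f y) (g y) - f y) x :=
      Eventually.of_forall fun y => by simp [h]
    have hminB : IsLocalMin (fun y => max (f y) (g y) - g y) x :=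
      Eventually.of_forall fun y => by simp [h]
    have hAB : A = B :=
      (sub_eq_zero.1 (hminA.hasFDerivAt_eq_zero (hdiff.hasFDerivAt.sub hfA.hasFDerivAt))).symm.trans
        (sub_eq_zero.1 (hminB.hasFDerivAt_eq_zero (hdiff.hasFDerivAt.sub hgB.hasFDerivAt)))
    refine ⟨A, hA, hfA.congr ?_⟩
    obtain ⟨b, hb⟩ := hfA
    obtain ⟨c, hc⟩ := hgB
    have hbc : b = c := by simpa [hb.self_of_nhds, hc.self_of_nhds, hAB] using h
    filter_upwards [hb, hc] with y hfy hgy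
    rw [hfy, hgy, hAB, hbc, max_self]
  · refine ⟨A, hA, hfA.congr ?_⟩
    filter_upwards [hD.continuous.continuousAt.eventually_lt hC.continuous.continuousAt h] with y hy
    exact max_eq_left hy.le

protected theorem min (hf : IsPiecewiseAffine μ Γ f) (hg : IsPiecewiseAffine μ Γ g) :
    IsPiecewiseAffine μ Γ fun x => min (f x) (g x) := by
  have hneg {Δ : Set (V →L[ℝ] ℝ)} {u : V → ℝ} (hu : IsPiecewiseAffine μ Δ u) :
      IsPiecewiseAffine μ (-Δ) fun x => -u x := by
    simpa using hu.const_smul_add_const (a := -1) (Γ' := -Δ) (by simp) 0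
  simpa [max_neg_neg] using hneg ((hneg hf).max (hneg hg))

theorem finset_inf' {ι : Type*} {s : Finset ι} (hs : s.Nonempty) {F : ι → V → ℝ}
    (hF : ∀ i ∈ s, IsPiecewiseAffine μ Γ (F i)) :
    IsPiecewiseAffine μ Γ (s.inf' hs F) :=
  Finset.inf'_induction hs F (fun _ hu _ hv => hu.min hv) hF

end Real

end IsPiecewiseAffine

/-- Piecewise affine maps with gradients in `Γ` on `G`, extended by `0` outside `G`. -/
structure IsPerturbation (μ : Measure V) (G : Set V) (Γ : Set (V →L[ℝ] W)) (w : V → W) : Prop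
    extends IsPiecewiseAffine (μ.restrict G) Γ w where
  eq_zero_of_notMem : ∀ x ∉ G, w x = 0

theorem IsPerturbation.support_subset {G : Set V} {Γ : Set (V →L[ℝ] W)} {w : V → W}
    (hw : IsPerturbation μ G Γ w) : Function.support w ⊆ G :=
  Function.support_subset_iff'.2 hw.eq_zero_of_notMem

end PiecewiseAffine

section Gluing

open Metric Set Topology Function
open scoped NNReal ENNReal

theorem lipschitzWith_finsum_of_disjoint_support {ι X W : Type*} [PseudoMetricSpace X]
    [SeminormedAddCommGroup W] {L : ℝ≥0} {f : ι → X → W} (hf : ∀ i, LipschitzWith L (f i))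
    (hdisj : Pairwise (Disjoint on fun i => support (f i))) :
    LipschitzWith (2 * L) fun x => ∑ᶠ i, f i x := by
  have hsub (x : X) : (support fun i => f i x).Subsingleton := fun i hi j hj => by
    by_contra hij
    exact (hdisj hij).le_bot ⟨hi, hj⟩
  have hfin (x : X) : (support fun i => f i x).Finite := (hsub x).finite
  have hcard (x : X) : (hfin x).toFinset.card ≤ 1 :=
    Finset.card_le_one.2 fun i hi j hj => hsub x (by simpa using hi) (by simpa using hj)
  refine LipschitzWith.of_dist_le_mul fun x y => ?_
  set s := (hfin x).toFinset ∪ (hfin y).toFinset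
  have hs : (s.card : ℝ) ≤ 2 := by
    exact_mod_cast (Finset.card_union_le _ _).trans (add_le_add (hcard x) (hcard y))
  rw [finsum_eq_sum_of_support_subset (s := s) _ (by simp [s]),
    finsum_eq_sum_of_support_subset (s := s) _ (by simp [s])]
  calc dist (∑ i ∈ s, f i x) (∑ i ∈ s, f i y) ≤ ∑ i ∈ s, dist (f i x) (f i y) :=
        dist_sum_sum_le _ _ _
    _ ≤ s.card • (L * dist x y) := Finset.sum_le_card_nsmul _ _ _ fun i _ => (hf i).dist_le_mul x y
    _ ≤ 2 * (L * dist x y) := by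
        rw [nsmul_eq_mul]
        gcongr
    _ = ↑(2 * L) * dist x y := by push_cast; ring

theorem finsum_eq_of_mem {ι X W : Type*} [AddCommMonoid W] {U : ι → Set X}
    (hdisj : Pairwise (Disjoint on U)) {f : ι → X → W} (hf : ∀ i, ∀ x ∉ U i, f i x = 0)
    {i : ι} {x : X} (hx : x ∈ U i) :
    ∑ᶠ j, f j x = f i x :=
  finsum_eq_single _ i fun j hji => hf j x fun hxj => (hdisj hji).le_bot ⟨hxj, hx⟩

namespace IsPerturbation

variable {V W : Type*} [NormedAddCommGroup V] [NormedSpace ℝ V] [MeasurableSpace V]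
  [NormedAddCommGroup W] [NormedSpace ℝ W] {μ : Measure V} {Γ : Set (V →L[ℝ] W)} {G : Set V}
  {w : V → W}

theorem exists_norm_le [FiniteDimensional ℝ V] (hw : IsPerturbation μ (ball 0 1) Γ w) :
    ∃ B, ∀ x, ‖w x‖ ≤ B := by
  obtain ⟨C, hC⟩ := hw.lipschitz
  have hsupp : HasCompactSupport w := .of_support_subset_isCompact (isCompact_closedBall 0 1)
    (hw.support_subset.trans ball_subset_closedBall)
  exact hsupp.exists_bound_of_continuous hC.continuous

variable {ι : Type*} {U : ι → Set V} {f : ι → V → W} {L : ℝ≥0}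

theorem lipschitzWith_finsum (hdisj : Pairwise (Disjoint on U))
    (hf : ∀ i, IsPerturbation μ (U i) Γ (f i)) (hL : ∀ i, LipschitzWith L (f i)) :
    LipschitzWith (2 * L) fun x => ∑ᶠ i, f i x :=
  lipschitzWith_finsum_of_disjoint_support hL fun i j hij =>
    (hdisj hij).mono (hf i).support_subset (hf j).support_subset

theorem finsum [OpensMeasurableSpace V] [Countable ι] (hU : ∀ i, IsOpen (U i))
    (hdisj : Pairwise (Disjoint on U)) (hcov : (⋃ i, U i : Set V) =ᵐ[μ] G) (hsub : ∀ i, U i ⊆ G)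
    (hf : ∀ i, IsPerturbation μ (U i) Γ (f i)) (hL : ∀ i, LipschitzWith L (f i)) :
    IsPerturbation μ G Γ fun x => ∑ᶠ i, f i x where
  lipschitz := ⟨2 * L, lipschitzWith_finsum hdisj hf hL⟩
  ae_germ := by
    rw [← Measure.restrict_congr_set hcov, ae_restrict_iUnion_iff]
    intro i
    filter_upwards [(hf i).ae_germ, ae_restrict_mem (hU i).measurableSet] with x ⟨A, hA, hx⟩ hxU
    refine ⟨A, hA, hx.congr ?_⟩
    filter_upwards [(hU i).mem_nhds hxU] with y hy
    exact finsum_eq_of_mem hdisj (fun j => (hf j).eq_zero_of_notMem) hy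
  eq_zero_of_notMem x hx :=
    finsum_eq_zero_of_forall_eq_zero fun i => (hf i).eq_zero_of_notMem x fun h => hx (hsub i h)

end IsPerturbation

end Gluing

section RescaledCopies

open Metric Set Topology Function
open scoped NNReal ENNReal

variable {V W : Type*} [NormedAddCommGroup V] [NormedSpace ℝ V] [NormedAddCommGroup W]
  [NormedSpace ℝ W]

theorem rescale_mem_ball_iff {x z : V} {r : ℝ} (hr : 0 < r) :
    r⁻¹ • (z - x) ∈ ball (0 : V) 1 ↔ z ∈ ball x r := by
  rw [mem_ball_zero_iff, norm_smul, norm_inv, Real.norm_of_nonneg hr.le, mem_ball, dist_eq_norm,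
    inv_mul_lt_iff₀ hr, mul_one]

theorem lipschitzWith_rescale {C : ℝ≥0} {w : V → W} {x : V} {r : ℝ} (hw : LipschitzWith C w)
    (hr : 0 < r) :
    LipschitzWith C fun z => r • w (r⁻¹ • (z - x)) := by
  refine LipschitzWith.of_dist_le_mul fun y z => ?_
  rw [dist_smul₀, Real.norm_of_nonneg hr.le]
  calc r * dist (w (r⁻¹ • (y - x))) (w (r⁻¹ • (z - x)))
      ≤ r * (C * dist (r⁻¹ • (y - x)) (r⁻¹ • (z - x))) := by
        gcongr
        exact hw.dist_le_mul _ _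
    _ = C * dist y z := by
        rw [dist_smul₀, dist_sub_right, norm_inv, Real.norm_of_nonneg hr.le]
        field_simp

variable [FiniteDimensional ℝ V] [MeasurableSpace V] [BorelSpace V]
  {μ : Measure V} [μ.IsAddHaarMeasure]

theorem exists_ae_cover_ball {G : Set V} {P : V → ℝ → Prop}
    (hP : ∀ x ∈ G, ∀ᶠ r in 𝓝[>] 0, P x r) :
    ∃ (t : Set V) (r : t → ℝ), Countable t ∧ (∀ x : t, (x : V) ∈ G ∧ 0 < r x ∧ P x (r x)) ∧
      Pairwise (Disjoint on fun x : t => ball (x : V) (r x)) ∧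
      μ (G \ ⋃ x : t, ball (x : V) (r x)) = 0 := by
  obtain ⟨t, r, ht, htG, hr, hcov, hdisj⟩ := Besicovitch.exists_disjoint_closedBall_covering_ae μ
    (fun x => {r | P x r}) G (fun x hx δ hδ =>
      ((hP x hx).and (Ioo_mem_nhdsGT hδ)).exists) (fun _ => 1) (fun _ _ => one_pos)
  have hsphere : μ (⋃ x ∈ t, sphere x (r x)) = 0 :=
    (measure_biUnion_null_iff ht).2 fun x hx =>
      Measure.addHaar_sphere_of_ne_zero _ _ (hr x hx).2.1.ne'
  refine ⟨t, fun x => r x, ht.to_subtype, fun x => ⟨htG x.2, (hr x x.2).2.1, (hr x x.2).1⟩,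
    fun x y hxy => ?_, measure_mono_null ?_ (measure_union_null hcov hsphere)⟩
  · exact (hdisj x.2 y.2 (Subtype.coe_injective.ne hxy)).mono ball_subset_closedBall
      ball_subset_closedBall
  · rintro z ⟨hz, hz'⟩
    by_cases h : z ∈ ⋃ x ∈ t, closedBall x (r x)
    · obtain ⟨x, hx, hzx⟩ := mem_iUnion₂.1 h
      refine Or.inr (mem_iUnion₂.2 ⟨x, hx, le_antisymm hzx (not_lt.1 fun hlt => hz' ?_)⟩)
      exact mem_iUnion.2 ⟨⟨x, hx⟩, hlt⟩
    · exact Or.inl ⟨hz, h⟩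

theorem exists_ae_cover_small_ball {G : Set V} (hG : IsOpen G) (B : ℝ) {ε : ℝ} (hε : 0 < ε) :
    ∃ (t : Set V) (r : t → ℝ), Countable t ∧
      (∀ x : t, 0 < r x ∧ ball (x : V) (r x) ⊆ G ∧ r x * B ≤ ε) ∧
      Pairwise (Disjoint on fun x : t => ball (x : V) (r x)) ∧
      (⋃ x : t, ball (x : V) (r x)) =ᵐ[μ] G := by
  have hsmall : ∀ x ∈ G, ∀ᶠ r : ℝ in 𝓝[>] 0, ball x r ⊆ G ∧ r * B ≤ ε := by
    intro x hx
    obtain ⟨δ, hδ, hball⟩ := isOpen_iff.1 hG x hx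
    have hlim : Tendsto (fun r : ℝ => r * B) (𝓝[>] 0) (𝓝 (0 * B)) :=
      ((continuous_mul_const B).tendsto 0).mono_left nhdsWithin_le_nhds
    filter_upwards [Ioo_mem_nhdsGT hδ, hlim.eventually_le_const (by simpa using hε)] with r hr hrB
    exact ⟨(ball_subset_ball hr.2.le).trans hball, hrB⟩
  obtain ⟨t, r, ht, hr, hdisj, hnull⟩ := exists_ae_cover_ball (μ := μ) hsmall
  exact ⟨t, r, ht, fun x => (hr x).2, hdisj,
    (LE.le.eventuallyLE (iUnion_subset fun x => (hr x).2.2.1)).antisymm (ae_le_set.2 hnull)⟩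

variable {x : V} {r : ℝ}

theorem map_rescale_restrict_ball (hr : 0 < r) :
    (μ.restrict (ball x r)).map (fun z => r⁻¹ • (z - x)) =
      ENNReal.ofReal (r ^ Module.finrank ℝ V) • μ.restrict (ball 0 1) := by
  have hpre : (fun z => r⁻¹ • (z - x)) ⁻¹' ball (0 : V) 1 = ball x r :=
    Set.ext fun z => rescale_mem_ball_iff hr
  have hcomp : μ.map (fun z => r⁻¹ • (z - x)) = (μ.map (· - x)).map (r⁻¹ • ·) :=
    (Measure.map_map (by fun_prop) (by fun_prop)).symm
  rw [← hpre, ← Measure.restrict_map (by fun_prop) measurableSet_ball, hcomp,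
    (measurePreserving_sub_right μ x).map_eq, Measure.map_addHaar_smul _ (inv_ne_zero hr.ne'),
    Measure.restrict_smul, inv_pow, inv_inv, abs_of_pos (by positivity)]

theorem ae_rescale_of_ae (hr : 0 < r) {P : V → Prop} (h : ∀ᵐ y ∂μ.restrict (ball 0 1), P y) :
    ∀ᵐ z ∂μ.restrict (ball x r), P (r⁻¹ • (z - x)) := by
  refine ae_of_ae_map (by fun_prop) ?_
  rw [map_rescale_restrict_ball hr]
  exact Measure.ae_smul_measure h _

theorem laverage_ball_rescale (hr : 0 < r) (f : V → ℝ≥0∞) :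
    ⨍⁻ z in ball x r, f (r⁻¹ • (z - x)) ∂μ = ⨍⁻ y in ball 0 1, f y ∂μ := by
  have hemb : MeasurableEmbedding fun z : V => r⁻¹ • (z - x) :=
    (measurableEmbedding_const_smul₀ (inv_ne_zero hr.ne')).comp
      (MeasurableEquiv.subRight x).measurableEmbedding
  have hmass : μ (ball x r) = ENNReal.ofReal (r ^ Module.finrank ℝ V) * μ (ball 0 1) := by
    simpa using Measure.addHaar_ball_mul_of_pos μ x hr 1
  rw [setLAverage_eq, setLAverage_eq, ← hemb.lintegral_map, map_rescale_restrict_ball hr,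
    lintegral_smul_measure, hmass, smul_eq_mul]
  exact ENNReal.mul_div_mul_left _ _ (by positivity) ENNReal.ofReal_ne_top

namespace IsPerturbation

variable {Γ : Set (V →L[ℝ] W)} {w : V → W} {G : Set V}

theorem rescale (hw : IsPerturbation μ (ball 0 1) Γ w) (hr : 0 < r) :
    IsPerturbation μ (ball x r) Γ fun z => r • w (r⁻¹ • (z - x)) where
  lipschitz := hw.lipschitz.imp fun _ hC => lipschitzWith_rescale hC hr
  ae_germ := (ae_rescale_of_ae hr hw.ae_germ).mono fun _ ⟨A, hA, hz⟩ => ⟨A, hA, hz.rescale hr.ne'⟩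
  eq_zero_of_notMem z hz := by
    rw [hw.eq_zero_of_notMem _ (mt (rescale_mem_ball_iff hr).1 hz), smul_zero]

theorem lipschitzWith_of_subset_closedBall [FiniteDimensional ℝ W] {R : ℝ≥0}
    (hw : IsPerturbation μ (ball 0 1) Γ w) (hΓ : Γ ⊆ closedBall 0 R) : LipschitzWith R w := by
  obtain ⟨C, hC⟩ := hw.lipschitz
  refine lipschitzWith_of_ae_norm_fderiv_le (μ := μ) hC ?_
  have hsphere : ∀ᵐ x ∂μ, x ∉ sphere (0 : V) 1 :=
    measure_eq_zero_iff_ae_notMem.1 (Measure.addHaar_sphere_of_ne_zero μ 0 one_ne_zero)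
  filter_upwards [hsphere, (ae_restrict_iff' measurableSet_ball).1 hw.ae_fderiv_mem] with x hx hgrad
  by_cases hball : x ∈ ball (0 : V) 1
  · exact mem_closedBall_zero_iff.1 (hΓ (hgrad hball))
  · have hzero : w =ᶠ[𝓝 x] 0 := by
      have hout : x ∈ (closedBall (0 : V) 1)ᶜ := fun h => by
        rw [← ball_union_sphere] at h
        exact h.elim hball hx
      filter_upwards [isClosed_closedBall.isOpen_compl.mem_nhds hout] with y hy
      exact hw.eq_zero_of_notMem y fun h => hy (ball_subset_closedBall h)
    simp [(HasAffineGermAt.of_eventually_eq_zero hzero).fderiv_eq]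

theorem setLIntegral_rescale (hw : IsPerturbation μ (ball 0 1) Γ w) (hr : 0 < r)
    (g : (V →L[ℝ] W) → ℝ≥0∞) :
    ∫⁻ z in ball x r, g (fderiv ℝ (fun z => r • w (r⁻¹ • (z - x))) z) ∂μ =
      (⨍⁻ y in ball 0 1, g (fderiv ℝ w y) ∂μ) * μ (ball x r) := by
  have hfderiv : ∀ᵐ z ∂μ.restrict (ball x r),
      fderiv ℝ (fun z => r • w (r⁻¹ • (z - x))) z = fderiv ℝ w (r⁻¹ • (z - x)) :=
    (ae_rescale_of_ae hr hw.ae_germ).mono fun z ⟨A, _, hz⟩ =>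
      (hz.rescale hr.ne').fderiv_eq.trans hz.fderiv_eq.symm
  rw [lintegral_congr_ae (hfderiv.mono fun z hz => congrArg g hz),
    ← laverage_ball_rescale hr fun y => g (fderiv ℝ w y), setLAverage_eq,
    ENNReal.div_mul_cancel (measure_ball_pos μ x hr).ne' measure_ball_lt_top.ne]

theorem exists_rescaled_copies {C : ℝ≥0} (hw : IsPerturbation μ (ball 0 1) Γ w)
    (hC : LipschitzWith C w) (hG : IsOpen G) {ε : ℝ} (hε : 0 < ε) :
    ∃ p, IsPerturbation μ G Γ p ∧ LipschitzWith (2 * C) p ∧ (∀ z, ‖p z‖ ≤ ε) ∧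
      ∀ g : (V →L[ℝ] W) → ℝ≥0∞, ∫⁻ z in G, g (fderiv ℝ p z) ∂μ =
        (⨍⁻ y in ball 0 1, g (fderiv ℝ w y) ∂μ) * μ G := by
  obtain ⟨B, hB⟩ := hw.exists_norm_le
  obtain ⟨t, r, ht, hr, hdisj, hcov⟩ := exists_ae_cover_small_ball (μ := μ) hG B hε
  set f : t → V → W := fun x z => r x • w ((r x)⁻¹ • (z - x))
  set p : V → W := fun z => ∑ᶠ x, f x z
  have hf (x : t) : IsPerturbation μ (ball x (r x)) Γ (f x) := hw.rescale (hr x).1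
  have hfL (x : t) : LipschitzWith C (f x) := lipschitzWith_rescale hC (hr x).1
  have hp (x : t) {z : V} (hz : z ∈ ball (x : V) (r x)) : p z = f x z :=
    finsum_eq_of_mem hdisj (fun j => (hf j).eq_zero_of_notMem) hz
  refine ⟨p, .finsum (fun _ => isOpen_ball) hdisj hcov (fun x => (hr x).2.1) hf hfL,
    lipschitzWith_finsum hdisj hf hfL, fun z => ?_, fun g => ?_⟩
  · by_cases hz : ∃ x : t, z ∈ ball (x : V) (r x)
    · obtain ⟨x, hzx⟩ := hz
      rw [hp x hzx, norm_smul, Real.norm_of_nonneg (hr x).1.le]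
      exact (mul_le_mul_of_nonneg_left (hB _) (hr x).1.le).trans (hr x).2.2
    · have hpz : p z = 0 := finsum_eq_zero_of_forall_eq_zero fun x =>
        (hf x).eq_zero_of_notMem z fun h => hz ⟨x, h⟩
      simpa [hpz] using hε.le
  · have hcopy (x : t) : ∫⁻ z in ball (x : V) (r x), g (fderiv ℝ p z) ∂μ =
        (⨍⁻ y in ball 0 1, g (fderiv ℝ w y) ∂μ) * μ (ball x (r x)) := by
      rw [← hw.setLIntegral_rescale (hr x).1]
      refine setLIntegral_congr_fun measurableSet_ball fun z hz => ?_
      have hloc : p =ᶠ[𝓝 z] f x :=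
        eventually_of_mem (isOpen_ball.mem_nhds hz) fun y hy => hp x hy
      exact congrArg g hloc.fderiv_eq
    rw [← Measure.restrict_congr_set hcov, ← measure_congr hcov,
      lintegral_iUnion (fun _ => measurableSet_ball) hdisj, measure_iUnion hdisj
      fun _ => measurableSet_ball, ← ENNReal.tsum_mul_left]
    exact tsum_congr hcopy

end IsPerturbation

end RescaledCopies

section TwoGradientProfiles

open Metric Set Topology
open scoped NNReal ENNReal

theorem isPiecewiseAffine_pi_norm {ι : Type*} [Fintype ι] {μ : Measure (ι → ℝ)}
    [μ.IsAddHaarMeasure] : IsPiecewiseAffine μ (closedBall 0 1) fun x : ι → ℝ => ‖x‖ := by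
  let pr (i : ι) : (ι → ℝ) →L[ℝ] ℝ := ContinuousLinearMap.proj i
  have hpr (i : ι) : ‖pr i‖ ≤ 1 :=
    (pr i).opNorm_le_bound zero_le_one fun x =>
      (norm_le_pi_norm x i).trans_eq (one_mul _).symm
  have hpos (i : ι) : IsPiecewiseAffine μ (closedBall 0 1) fun x => pr i x + 0 :=
    .of_affine (mem_closedBall_zero_iff.2 (hpr i)) 0
  have hneg (i : ι) : IsPiecewiseAffine μ (closedBall 0 1) fun x => (-pr i) x + 0 :=
    .of_affine (mem_closedBall_zero_iff.2 ((norm_neg _).trans_le (hpr i))) 0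
  have habs (i : ι) : IsPiecewiseAffine μ (closedBall 0 1) fun x : ι → ℝ => |x i| := by
    simpa [abs, pr] using (hpos i).max (hneg i)
  have hsup (s : Finset ι) :
      IsPiecewiseAffine μ (closedBall 0 1) fun x => ((s.sup fun i => ‖x i‖₊ : ℝ≥0) : ℝ) := by
    induction s using Finset.induction with
    | empty =>
      simpa using IsPiecewiseAffine.of_affine (μ := μ) (A := (0 : (ι → ℝ) →L[ℝ] ℝ))
        (mem_closedBall_self zero_le_one) 0
    | insert i s _ ih => simpa [Finset.sup_insert] using (habs i).max ih
  exact hsup Finset.univ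

theorem exists_oscillation {V : Type*} [NormedAddCommGroup V] [NormedSpace ℝ V]
    [FiniteDimensional ℝ V] [MeasurableSpace V] [BorelSpace V] {μ : Measure V}
    [μ.IsAddHaarMeasure] (φ : V →L[ℝ] ℝ) {t h : ℝ} (ht : t ∈ Icc (0 : ℝ) 1) (hh : 0 < h) :
    ∃ S : V → ℝ, IsPiecewiseAffine μ {(1 - t) • φ, -(t • φ)} S ∧ (∀ x, 0 ≤ S x) ∧
      ∀ x ∈ ball (0 : V) 1, S x ≤ h := by
  set F : ℤ → V → ℝ := fun m x => max ((1 - t) * (φ x - m * h)) (-(t * (φ x - m * h)))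
  have hF (m : ℤ) : IsPiecewiseAffine μ {(1 - t) • φ, -(t • φ)} (F m) := by
    have hup : IsPiecewiseAffine μ {(1 - t) • φ, -(t • φ)}
        fun x => ((1 - t) • φ) x + -((1 - t) * (m * h)) := .of_affine (Or.inl rfl) _
    have hdown : IsPiecewiseAffine μ {(1 - t) • φ, -(t • φ)}
        fun x => (-(t • φ)) x + t * (m * h) := .of_affine (Or.inr rfl) _
    convert hup.max hdown using 3 <;>
      simp only [smul_apply, neg_apply, smul_eq_mul] <;> ring
  obtain ⟨M, hM⟩ := exists_nat_gt (‖φ‖ / h + 1)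
  have hne : (Finset.Icc (-M : ℤ) M).Nonempty := ⟨0, by simp⟩
  refine ⟨(Finset.Icc (-M : ℤ) M).inf' hne F, .finset_inf' hne fun m _ => hF m, fun x => ?_,
    fun x hx => ?_⟩
  · rw [Finset.inf'_apply]
    refine (Finset.le_inf'_iff _ _).2 fun m _ => ?_
    rcases le_total 0 (φ x - m * h) with hs | hs
    · exact le_max_of_le_left (mul_nonneg (sub_nonneg.2 ht.2) hs)
    · exact le_max_of_le_right (neg_nonneg.2 (mul_nonpos_of_nonneg_of_nonpos ht.1 hs))
  · rw [Finset.inf'_apply]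
    have hφx : |φ x / h| ≤ ‖φ‖ / h := by
      rw [abs_div, abs_of_pos hh]
      gcongr
      exact φ.unit_le_opNorm x (mem_ball_zero_iff.1 hx).le
    obtain ⟨hlow, hupp⟩ := abs_le.1 hφx
    have hfloor := Int.floor_le (φ x / h)
    have hfloor' := Int.lt_floor_add_one (φ x / h)
    have hmem : ⌊φ x / h⌋ ∈ Finset.Icc (-M : ℤ) M := by
      rw [Finset.mem_Icc]
      constructor
      · exact_mod_cast (by push_cast; linarith : ((-M : ℤ) : ℝ) ≤ ⌊φ x / h⌋)
      · exact_mod_cast (by linarith : (⌊φ x / h⌋ : ℝ) ≤ M)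
    rw [le_div_iff₀ hh] at hfloor
    rw [div_lt_iff₀ hh, add_mul, one_mul] at hfloor'
    refine (Finset.inf'_le _ hmem).trans (max_le ?_ ?_)
    · nlinarith [ht.1, ht.2]
    · nlinarith [ht.1, ht.2]

theorem exists_two_gradient_profile {ι : Type*} [Fintype ι] {μ : Measure (ι → ℝ)}
    [μ.IsAddHaarMeasure] (φ : (ι → ℝ) →L[ℝ] ℝ) {t δ : ℝ} (ht : t ∈ Icc (0 : ℝ) 1) (hδ : 0 < δ)
    {F : Set (ι → ℝ)} (hF : IsClosed F) (hF1 : F ⊆ ball 0 1) :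
    ∃ ψ : (ι → ℝ) → ℝ,
      IsPerturbation μ (ball 0 1) ({(1 - t) • φ, -(t • φ)} ∪ closedBall 0 δ) ψ ∧
      ∀ᵐ x ∂μ.restrict F, x ∈ affineRegion ψ ((1 - t) • φ) ∪ affineRegion ψ (-(t • φ)) := by
  obtain ⟨s, hs1, hFs⟩ := exists_lt_subset_ball hF hF1
  obtain ⟨S, hS, hS0, hSh⟩ :=
    exists_oscillation (μ := μ) φ ht (mul_pos hδ (sub_pos.2 hs1))
  set cone : (ι → ℝ) → ℝ := fun x => -δ * ‖x‖ + δ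
  have hcone : IsPiecewiseAffine μ (closedBall 0 δ) cone :=
    isPiecewiseAffine_pi_norm.const_smul_add_const (fun A hA => by
      rw [mem_closedBall_zero_iff] at hA ⊢
      rw [norm_smul, norm_neg, Real.norm_of_nonneg hδ.le]
      exact mul_le_of_le_one_right hδ.le hA) δ
  have hzero : IsPiecewiseAffine μ (closedBall 0 δ) fun _ : ι → ℝ => (0 : ℝ) := by
    simpa using IsPiecewiseAffine.of_affine (μ := μ) (A := (0 : (ι → ℝ) →L[ℝ] ℝ))
      (mem_closedBall_self hδ.le) 0
  set ψ : (ι → ℝ) → ℝ := fun x => max 0 (min (S x) (cone x))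
  have hψ : IsPiecewiseAffine μ ({(1 - t) • φ, -(t • φ)} ∪ closedBall 0 δ) ψ :=
    (hzero.mono subset_union_right).max
      ((hS.mono subset_union_left).min (hcone.mono subset_union_right))
  refine ⟨ψ, ⟨hψ.restrict _, fun x hx => ?_⟩, ?_⟩
  · have hnonpos : cone x ≤ 0 := by
      have : 1 ≤ ‖x‖ := not_lt.1 (mt mem_ball_zero_iff.2 hx)
      simp only [cone]
      nlinarith
    exact max_eq_left ((min_le_right _ _).trans hnonpos)
  · have hψS {x : ι → ℝ} (hx : x ∈ ball 0 s) : ψ x = S x := by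
      have hle : S x ≤ cone x := (hSh x (ball_subset_ball hs1.le hx)).trans (by
        have : ‖x‖ ≤ s := (mem_ball_zero_iff.1 hx).le
        simp only [cone]
        nlinarith)
      rw [show ψ x = max 0 (min (S x) (cone x)) from rfl, min_eq_left hle, max_eq_right (hS0 x)]
    filter_upwards [ae_restrict_of_ae hS.ae_germ, ae_restrict_mem hF.measurableSet]
      with x ⟨A, hA, hx⟩ hxF
    have hgerm : HasAffineGermAt ψ A x :=
      hx.congr (eventually_of_mem (isOpen_ball.mem_nhds (hFs hxF)) fun y hy => hψS hy)
    rcases hA with rfl | rfl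
    · exact Or.inl hgerm
    · exact Or.inr hgerm

theorem IsPerturbation.ae_norm_indicator_sub_lineDeriv_le {V : Type*} [NormedAddCommGroup V]
    [NormedSpace ℝ V] [MeasurableSpace V] {μ : Measure V} {G : Set V} {A B : V →L[ℝ] ℝ} {δ : ℝ}
    {ψ : V → ℝ} (hAB : A ≠ B) (hψ : IsPerturbation μ G ({A, B} ∪ closedBall 0 δ) ψ) (hδ : 0 ≤ δ)
    (v : V) : ∀ᵐ x ∂μ.restrict G, ‖(affineRegion ψ A).indicator (fun _ => A v) x +
      (affineRegion ψ B).indicator (fun _ => B v) x - lineDeriv ℝ ψ x v‖ ≤ δ * ‖v‖ := by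
  filter_upwards [hψ.ae_germ] with x ⟨A', hA', hx⟩
  have hv : lineDeriv ℝ ψ x v = A' v := (hx.hasFDerivAt.hasLineDerivAt v).lineDeriv
  by_cases hxA : x ∈ affineRegion ψ A
  · have hxB := disjoint_left.1 (disjoint_affineRegion ψ hAB) hxA
    obtain rfl : A' = A := hx.fderiv_eq.symm.trans (HasAffineGermAt.fderiv_eq hxA)
    simpa [hxA, hxB, hv] using by positivity
  by_cases hxB : x ∈ affineRegion ψ B
  · obtain rfl : A' = B := hx.fderiv_eq.symm.trans (HasAffineGermAt.fderiv_eq hxB)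
    simpa [hxA, hxB, hv] using by positivity
  rcases hA' with (rfl | rfl) | hA'
  · exact absurd hx hxA
  · exact absurd hx hxB
  · simpa [hxA, hxB, hv] using A'.le_of_opNorm_le (mem_closedBall_zero_iff.1 hA') v

section Balance

variable {V : Type*} [NormedAddCommGroup V] [NormedSpace ℝ V] [FiniteDimensional ℝ V]
  [MeasurableSpace V] [BorelSpace V] {μ : Measure V} [μ.IsAddHaarMeasure]

theorem integral_lineDeriv_eq_zero {C : ℝ≥0} {ψ : V → ℝ} (hψ : LipschitzWith C ψ)
    (hsupp : HasCompactSupport ψ) (v : V) : ∫ x, lineDeriv ℝ ψ x v ∂μ = 0 := by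
  have h := (LipschitzWith.const (1 : ℝ)).integral_lineDeriv_mul_eq (μ := μ) hψ hsupp (-v)
  simpa [lineDeriv] using h.symm

theorem IsPerturbation.setIntegral_lineDeriv_eq_zero {Γ : Set (V →L[ℝ] ℝ)} {ψ : V → ℝ}
    (hψ : IsPerturbation μ (ball 0 1) Γ ψ) (v : V) :
    ∫ x in ball 0 1, lineDeriv ℝ ψ x v ∂μ = 0 := by
  obtain ⟨C, hC⟩ := hψ.lipschitz
  have htsupp : tsupport ψ ⊆ closedBall 0 1 :=
    closure_minimal (hψ.support_subset.trans ball_subset_closedBall) isClosed_closedBall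
  have hball : ball (0 : V) 1 =ᵐ[μ] closedBall 0 1 :=
    ae_eq_set.2 ⟨by simp [sdiff_eq_empty.2 ball_subset_closedBall], by
      rw [closedBall_sdiff_ball]
      exact Measure.addHaar_sphere_of_ne_zero μ 0 one_ne_zero⟩
  rw [setIntegral_congr_set hball, setIntegral_eq_integral_of_forall_compl_eq_zero,
    integral_lineDeriv_eq_zero hC (.of_support_subset_isCompact (isCompact_closedBall 0 1)
      (subset_closure.trans htsupp))]
  intro x hx
  have hzero : ψ =ᶠ[𝓝 x] 0 := notMem_tsupport_iff_eventuallyEq.1 (mt (@htsupp x) hx)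
  rw [((HasAffineGermAt.of_eventually_eq_zero hzero).hasFDerivAt.hasLineDerivAt v).lineDeriv,
    zero_apply]

variable {A B : V →L[ℝ] ℝ} {δ : ℝ} {ψ : V → ℝ}

theorem IsPerturbation.norm_measureReal_smul_add_le (hAB : A ≠ B)
    (hψ : IsPerturbation μ (ball 0 1) ({A, B} ∪ closedBall 0 δ) ψ) (hδ : 0 ≤ δ) :
    ‖μ.real (ball 0 1 ∩ affineRegion ψ A) • A + μ.real (ball 0 1 ∩ affineRegion ψ B) • B‖ ≤
      δ * μ.real (ball 0 1) := by
  refine ContinuousLinearMap.opNorm_le_bound _ (by positivity) fun v => ?_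
  obtain ⟨C, hC⟩ := hψ.lipschitz
  have hmeas (A' : V →L[ℝ] ℝ) : MeasurableSet (affineRegion ψ A') :=
    (isOpen_affineRegion ψ A').measurableSet
  have : IsFiniteMeasure (μ.restrict (ball 0 1)) :=
    isFiniteMeasure_restrict.2 measure_ball_lt_top.ne
  have hind (A' : V →L[ℝ] ℝ) :
      IntegrableOn ((affineRegion ψ A').indicator fun _ => A' v) (ball 0 1) μ :=
    (integrable_const _).indicator (hmeas A')
  have hline : IntegrableOn (fun x => lineDeriv ℝ ψ x v) (ball 0 1) μ :=
    ((hC.locallyIntegrable_lineDeriv v).integrableOn_isCompact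
      (isCompact_closedBall 0 1)).mono_set ball_subset_closedBall
  have hmean : ∫ x in ball 0 1, ((affineRegion ψ A).indicator (fun _ => A v) x +
      (affineRegion ψ B).indicator (fun _ => B v) x - lineDeriv ℝ ψ x v) ∂μ =
      (μ.real (ball 0 1 ∩ affineRegion ψ A) • A + μ.real (ball 0 1 ∩ affineRegion ψ B) • B) v := by
    rw [integral_sub ((hind A).fun_add (hind B)) hline, hψ.setIntegral_lineDeriv_eq_zero, sub_zero,
      integral_add (hind A) (hind B), setIntegral_indicator (hmeas A),
      setIntegral_indicator (hmeas B), setIntegral_const, setIntegral_const]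
    rfl
  rw [← hmean, mul_right_comm]
  exact norm_setIntegral_le_of_norm_le_const_ae measure_ball_lt_top
    (hψ.ae_norm_indicator_sub_lineDeriv_le hAB hδ v)

theorem IsPerturbation.measureReal_affineRegion_le {φ : V →L[ℝ] ℝ} (hφ : φ ≠ 0) {t ε : ℝ}
    (ht : t ∈ Icc (0 : ℝ) 1) (hδ : 0 ≤ δ) (hε : δ ≤ ε * ‖φ‖)
    (hψ : IsPerturbation μ (ball 0 1) ({(1 - t) • φ, -(t • φ)} ∪ closedBall 0 δ) ψ) :
    μ.real (ball 0 1 ∩ affineRegion ψ ((1 - t) • φ)) ≤ (t + ε) * μ.real (ball 0 1) ∧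
      μ.real (ball 0 1 ∩ affineRegion ψ (-(t • φ))) ≤ (1 - t + ε) * μ.real (ball 0 1) := by
  have hne : (1 - t) • φ ≠ -(t • φ) := fun h =>
    hφ (by simpa [← add_smul] using eq_neg_iff_add_eq_zero.1 h)
  have hbalance := hψ.norm_measureReal_smul_add_le hne hδ
  have hsum : μ.real (ball 0 1 ∩ affineRegion ψ ((1 - t) • φ)) +
      μ.real (ball 0 1 ∩ affineRegion ψ (-(t • φ))) ≤ μ.real (ball 0 1) := by
    rw [← measureReal_union ((disjoint_affineRegion ψ hne).mono inter_subset_right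
      inter_subset_right) (measurableSet_ball.inter (isOpen_affineRegion ψ _).measurableSet)
      (measure_ne_top_of_subset inter_subset_left measure_ball_lt_top.ne)
      (measure_ne_top_of_subset inter_subset_left measure_ball_lt_top.ne)]
    exact measureReal_mono (union_subset inter_subset_left inter_subset_left)
      measure_ball_lt_top.ne
  generalize μ.real (ball 0 1 ∩ affineRegion ψ ((1 - t) • φ)) = α at *
  generalize μ.real (ball 0 1 ∩ affineRegion ψ (-(t • φ))) = β at *
  have hφ0 : 0 < ‖φ‖ := norm_pos_iff.2 hφ
  have hdiff : |(1 - t) * α - t * β| ≤ ε * μ.real (ball 0 1) := by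
    have hcomb : α • ((1 - t) • φ) + β • -(t • φ) = ((1 - t) * α - t * β) • φ := by module
    rw [hcomb, norm_smul, Real.norm_eq_abs] at hbalance
    refine le_of_mul_le_mul_right (hbalance.trans ?_) hφ0
    rw [mul_right_comm]
    gcongr
  obtain ⟨hα, hβ⟩ := abs_le.1 hdiff
  have ht' := mul_le_mul_of_nonneg_left hsum ht.1
  have ht'' := mul_le_mul_of_nonneg_left hsum (sub_nonneg.2 ht.2)
  exact ⟨by linarith, by linarith⟩

end Balance

theorem exists_balanced_profile {ι : Type*} [Fintype ι] {μ : Measure (ι → ℝ)}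
    [μ.IsAddHaarMeasure] {φ : (ι → ℝ) →L[ℝ] ℝ} (hφ : φ ≠ 0) {t δ ε : ℝ} (ht : t ∈ Icc (0 : ℝ) 1)
    (hδ : 0 < δ) (hε : 0 < ε) :
    ∃ ψ : (ι → ℝ) → ℝ,
      IsPerturbation μ (ball 0 1) ({(1 - t) • φ, -(t • φ)} ∪ closedBall 0 δ) ψ ∧
      μ (ball 0 1 ∩ affineRegion ψ ((1 - t) • φ)) ≤ .ofReal (t + ε) * μ (ball 0 1) ∧
      μ (ball 0 1 ∩ affineRegion ψ (-(t • φ))) ≤ .ofReal (1 - t + ε) * μ (ball 0 1) ∧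
      μ (ball 0 1 \ (affineRegion ψ ((1 - t) • φ) ∪ affineRegion ψ (-(t • φ)))) ≤
        .ofReal ε * μ (ball 0 1) := by
  have hV : μ (ball (0 : ι → ℝ) 1) ≠ ∞ := measure_ball_lt_top.ne
  have hV0 : μ (ball (0 : ι → ℝ) 1) ≠ 0 := (measure_ball_pos μ 0 one_pos).ne'
  obtain ⟨F, hF1, hF, hFμ⟩ := measurableSet_ball.exists_isCompact_sdiff_lt hV
    (mul_ne_zero (ENNReal.ofReal_pos.2 hε).ne' hV0)
  have hδε : 0 < min δ (ε * ‖φ‖) := lt_min hδ (mul_pos hε (norm_pos_iff.2 hφ))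
  obtain ⟨ψ, hψ, hψF⟩ := exists_two_gradient_profile (μ := μ) φ ht hδε hF.isClosed hF1
  obtain ⟨hα, hβ⟩ := hψ.measureReal_affineRegion_le hφ ht hδε.le (min_le_right _ _)
  have hle {U : Set (ι → ℝ)} {c : ℝ} (hc : 0 ≤ c)
      (hU : μ.real (ball 0 1 ∩ U) ≤ c * μ.real (ball 0 1)) :
      μ (ball 0 1 ∩ U) ≤ .ofReal c * μ (ball 0 1) := by
    rw [← ofReal_measureReal hV, ← ENNReal.ofReal_mul hc]
    exact (ENNReal.le_ofReal_iff_toReal_le (measure_ne_top_of_subset inter_subset_left hV)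
      (by positivity)).2 hU
  have hΓ := union_subset_union_right {(1 - t) • φ, -(t • φ)}
    (closedBall_subset_closedBall (x := (0 : (ι → ℝ) →L[ℝ] ℝ)) (min_le_left δ (ε * ‖φ‖)))
  refine ⟨ψ, ⟨hψ.mono hΓ, hψ.eq_zero_of_notMem⟩, hle (by linarith [ht.1]) hα,
    hle (by linarith [ht.2]) hβ, (measure_mono_ae ?_).trans hFμ.le⟩
  filter_upwards [(ae_restrict_iff' hF.measurableSet).1 hψF] with x hx hxU
  exact ⟨hxU.1, fun hxF => hxU.2 (hx hxF)⟩

end TwoGradientProfiles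

section RelaxedCost

open Metric Set Topology
open scoped NNReal ENNReal

variable {V W : Type*} [NormedAddCommGroup V] [NormedSpace ℝ V] [NormedAddCommGroup W]
  [NormedSpace ℝ W]

theorem affineRegion_smul_const (f : V → ℝ) (φ : V →L[ℝ] ℝ) {a : W} (ha : a ≠ 0) :
    affineRegion (fun x => f x • a) (φ.smulRight a) = affineRegion f φ := by
  obtain ⟨L, hL⟩ := SeparatingDual.exists_eq_one (R := ℝ) ha
  refine Subset.antisymm (fun x ⟨b, hb⟩ => ⟨L b, ?_⟩) fun x hx => HasAffineGermAt.smul_const hx a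
  filter_upwards [hb] with y hy
  simpa [hL] using congrArg L hy

variable [MeasurableSpace V] {μ : Measure V} {G U : Set V} {X X₁ X₂ ξ : V →L[ℝ] W}
  {Γ K : Set (V →L[ℝ] W)} {g : (V →L[ℝ] W) → ℝ≥0∞} {u p w : V → W}

theorem IsPerturbation.smul_const {Δ : Set (V →L[ℝ] ℝ)} {ψ : V → ℝ} (hψ : IsPerturbation μ G Δ ψ)
    (a : W) : IsPerturbation μ G ((·.smulRight a) '' Δ) fun x => ψ x • a where
  lipschitz := hψ.lipschitz.imp' _ fun _ hC =>
    ((ContinuousLinearMap.id ℝ ℝ).smulRight a).lipschitz.comp hC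
  ae_germ := hψ.ae_germ.mono fun _ ⟨A, hA, hx⟩ => ⟨_, mem_image_of_mem _ hA, hx.smul_const a⟩
  eq_zero_of_notMem x hx := by rw [hψ.eq_zero_of_notMem x hx, zero_smul]

theorem IsPerturbation.ae_germ_and_lintegral_eq_of_eqOn_add [OpensMeasurableSpace V]
    (hU : IsOpen U) (hUX : U ⊆ affineRegion u X) (hp : IsPerturbation μ U {A | ξ + X + A ∈ K} p)
    (hw : EqOn w (u + p) U) :
    (∀ᵐ x ∂μ.restrict U, ∃ A ∈ {A | ξ + A ∈ K}, HasAffineGermAt w A x) ∧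
      ∫⁻ x in U, g (ξ + fderiv ℝ w x) ∂μ = ∫⁻ x in U, g (ξ + X + fderiv ℝ p x) ∂μ := by
  have hgerm : ∀ᵐ x ∂μ.restrict U,
      ∃ Y, ξ + X + Y ∈ K ∧ HasAffineGermAt p Y x ∧ HasAffineGermAt w (X + Y) x := by
    filter_upwards [hp.ae_germ, ae_restrict_mem hU.measurableSet] with x ⟨Y, hY, hx⟩ hxU
    exact ⟨Y, hY, hx, (HasAffineGermAt.add (hUX hxU) hx).congr
      (eventually_of_mem (hU.mem_nhds hxU) hw)⟩
  refine ⟨?_, lintegral_congr_ae ?_⟩ <;> filter_upwards [hgerm] with x ⟨Y, hY, hpx, hwx⟩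
  · exact ⟨X + Y, (add_assoc ξ X Y).symm ▸ hY, hwx⟩
  · rw [hpx.fderiv_eq, hwx.fderiv_eq, add_assoc]

theorem IsPerturbation.ae_germ_sdiff_affineRegion [OpensMeasurableSpace V] (hG : IsOpen G)
    (hu : IsPerturbation μ G ({X₁, X₂} ∪ Γ) u)
    (hw : ∀ x ∉ affineRegion u X₁ ∪ affineRegion u X₂, w x = u x) :
    ∀ᵐ x ∂μ.restrict (G \ (affineRegion u X₁ ∪ affineRegion u X₂)),
      ∃ X ∈ Γ, HasAffineGermAt w X x := by
  have hmeas : MeasurableSet (affineRegion u X₁ ∪ affineRegion u X₂) :=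
    ((isOpen_affineRegion u X₁).union (isOpen_affineRegion u X₂)).measurableSet
  filter_upwards [ae_restrict_of_ae_restrict_of_subset sdiff_subset hu.ae_germ,
    ae_restrict_mem (hG.measurableSet.diff hmeas)] with x ⟨X, hX, hx⟩ hxG
  have hne {X' : V →L[ℝ] W} (hX' : x ∉ affineRegion u X') : X ≠ X' := fun h => hX' (h ▸ hx)
  have h₁ := hne fun h => hxG.2 (Or.inl h)
  have h₂ := hne fun h => hxG.2 (Or.inr h)
  have hXΓ : X ∈ Γ := by simpa [h₁, h₂] using hX
  refine ⟨X, hXΓ, hx.congr ?_⟩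
  filter_upwards [(isOpen_affineRegion u X).mem_nhds hx] with y hy
  exact hw y (not_or.2 ⟨disjoint_left.1 (disjoint_affineRegion u h₁) hy,
    disjoint_left.1 (disjoint_affineRegion u h₂) hy⟩)

/-- The relaxation of the energy density `g`: the infimum of the mean energy on the unit ball over
the piecewise affine maps with the boundary values of `ξ` and gradients in `K`. -/
noncomputable def relaxedCost (μ : Measure V) (K : Set (V →L[ℝ] W)) (g : (V →L[ℝ] W) → ℝ≥0∞)
    (ξ : V →L[ℝ] W) : ℝ≥0∞ :=
  ⨅ (w : V → W) (_ : IsPerturbation μ (ball 0 1) {A | ξ + A ∈ K} w),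
    ⨍⁻ x in ball 0 1, g (ξ + fderiv ℝ w x) ∂μ

theorem IsPerturbation.relaxedCost_le
    (hw : IsPerturbation μ (ball 0 1) {A | ξ + A ∈ K} w) :
    relaxedCost μ K g ξ ≤ ⨍⁻ x in ball 0 1, g (ξ + fderiv ℝ w x) ∂μ :=
  iInf₂_le w hw

variable [FiniteDimensional ℝ V] [μ.IsAddHaarMeasure]

theorem relaxedCost_le_of_mem (hξ : ξ ∈ K) : relaxedCost μ K g ξ ≤ g ξ := by
  have hzero : IsPerturbation μ (ball 0 1) {A | ξ + A ∈ K} fun _ : V => (0 : W) :=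
    ⟨⟨⟨0, .const 0⟩, Eventually.of_forall fun x =>
      ⟨0, by simpa using hξ, .of_eventually_eq_zero .rfl⟩⟩, fun _ _ => rfl⟩
  refine hzero.relaxedCost_le.trans_eq ?_
  simp [setLAverage_const, (measure_ball_pos μ (0 : V) one_pos).ne', measure_ball_lt_top.ne]

variable [BorelSpace V]

theorem exists_perturbation_setLIntegral_le {c : ℝ≥0∞} (h : relaxedCost μ K g ξ < c)
    (hG : IsOpen G) :
    ∃ p, IsPerturbation μ G {A | ξ + A ∈ K} p ∧
      ∫⁻ x in G, g (ξ + fderiv ℝ p x) ∂μ ≤ c * μ G := by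
  obtain ⟨w, hw⟩ := iInf_lt_iff.1 h
  obtain ⟨hw, hc⟩ := iInf_lt_iff.1 hw
  obtain ⟨C, hC⟩ := hw.lipschitz
  obtain ⟨p, hp, -, -, hcost⟩ := hw.exists_rescaled_copies hC hG one_pos
  exact ⟨p, hp, (hcost fun A => g (ξ + A)).trans_le (by gcongr)⟩

theorem IsPerturbation.exists_refinement (hG : IsOpen G) (hX : X₁ ≠ X₂)
    (hu : IsPerturbation μ G ({X₁, X₂} ∪ Γ) u) (hΓ : ∀ X ∈ Γ, ξ + X ∈ K) {c₁ c₂ c : ℝ≥0∞}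
    (h₁ : relaxedCost μ K g (ξ + X₁) < c₁) (h₂ : relaxedCost μ K g (ξ + X₂) < c₂)
    (hg : ∀ X ∈ Γ, g (ξ + X) ≤ c) :
    ∃ w, IsPerturbation μ G {A | ξ + A ∈ K} w ∧
      ∫⁻ x in G, g (ξ + fderiv ℝ w x) ∂μ ≤ c₁ * μ (G ∩ affineRegion u X₁) +
        c₂ * μ (G ∩ affineRegion u X₂) +
        c * μ (G \ (affineRegion u X₁ ∪ affineRegion u X₂)) := by
  have hopen (X : V →L[ℝ] W) : IsOpen (G ∩ affineRegion u X) := hG.inter (isOpen_affineRegion u X)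
  obtain ⟨p₁, hp₁, hc₁⟩ := exists_perturbation_setLIntegral_le h₁ (hopen X₁)
  obtain ⟨p₂, hp₂, hc₂⟩ := exists_perturbation_setLIntegral_le h₂ (hopen X₂)
  have hp₁' (x : V) (hx : x ∉ affineRegion u X₁) : p₁ x = 0 :=
    hp₁.eq_zero_of_notMem x fun h => hx h.2
  have hp₂' (x : V) (hx : x ∉ affineRegion u X₂) : p₂ x = 0 :=
    hp₂.eq_zero_of_notMem x fun h => hx h.2
  have hdisj := disjoint_left.1 (disjoint_affineRegion u hX)
  obtain ⟨hgerm₁, h_int₁⟩ := hp₁.ae_germ_and_lintegral_eq_of_eqOn_add (w := u + p₁ + p₂) (g := g)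
    (hopen X₁) inter_subset_right fun x hx => by simp [hp₂' x (hdisj hx.2)]
  obtain ⟨hgerm₂, h_int₂⟩ := hp₂.ae_germ_and_lintegral_eq_of_eqOn_add (w := u + p₁ + p₂) (g := g)
    (hopen X₂) inter_subset_right fun x hx => by simp [hp₁' x fun h => hdisj h hx.2]
  have hgerm₃ := hu.ae_germ_sdiff_affineRegion (w := u + p₁ + p₂) hG fun x hx => by
    simp [hp₁' x fun h => hx (Or.inl h), hp₂' x fun h => hx (Or.inr h)]
  have hcover : μ.restrict G = μ.restrict (G ∩ affineRegion u X₁ ∪ G ∩ affineRegion u X₂ ∪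
      G \ (affineRegion u X₁ ∪ affineRegion u X₂)) := by
    rw [← inter_union_distrib_left, inter_union_sdiff]
  refine ⟨u + p₁ + p₂, ⟨⟨?_, ?_⟩, fun x hx => ?_⟩, ?_⟩
  · obtain ⟨C, hC⟩ := hu.lipschitz
    obtain ⟨C₁, hC₁⟩ := hp₁.lipschitz
    obtain ⟨C₂, hC₂⟩ := hp₂.lipschitz
    exact ⟨_, (hC.add hC₁).add hC₂⟩
  · rw [hcover, ae_restrict_union_iff, ae_restrict_union_iff]
    exact ⟨⟨hgerm₁, hgerm₂⟩, hgerm₃.mono fun x ⟨X, hX, hx⟩ => ⟨X, hΓ X hX, hx⟩⟩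
  · simp [hu.eq_zero_of_notMem x hx, hp₁.eq_zero_of_notMem x fun h => hx h.1,
      hp₂.eq_zero_of_notMem x fun h => hx h.1]
  · rw [hcover]
    refine (lintegral_union_le _ _ _).trans (add_le_add ((lintegral_union_le _ _ _).trans
      (add_le_add (h_int₁.trans_le hc₁) (h_int₂.trans_le hc₂))) ?_)
    rw [← setLIntegral_const]
    refine lintegral_mono_ae (hgerm₃.mono fun x ⟨X, hX, hx⟩ => ?_)
    rw [hx.fderiv_eq]
    exact hg X hX

section Convexity

variable {ι : Type*} [Fintype ι] {μ : Measure (ι → ℝ)} [μ.IsAddHaarMeasure]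
  {ξ A B : (ι → ℝ) →L[ℝ] W} {K : Set ((ι → ℝ) →L[ℝ] W)} {g : ((ι → ℝ) →L[ℝ] W) → ℝ≥0∞}
  {φ : (ι → ℝ) →L[ℝ] ℝ} {a : W} {t : ℝ}

theorem relaxedCost_le_of_relaxedCost_lt (hK : K ∈ 𝓝 ξ) {D : ℝ≥0∞} (hg : ∀ A ∈ K, g A ≤ D)
    (hφ : φ ≠ 0) (ha : a ≠ 0) (ht : t ∈ Icc (0 : ℝ) 1) {c₁ c₂ : ℝ≥0∞}
    (h₁ : relaxedCost μ K g (ξ + (1 - t) • φ.smulRight a) < c₁)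
    (h₂ : relaxedCost μ K g (ξ - t • φ.smulRight a) < c₂) {ε : ℝ} (hε : 0 < ε) :
    relaxedCost μ K g ξ ≤
      c₁ * .ofReal (t + ε) + c₂ * .ofReal (1 - t + ε) + D * .ofReal ε := by
  obtain ⟨r, hr, hrK⟩ := Metric.nhds_basis_closedBall.mem_iff.1 hK
  have ha0 : 0 < ‖a‖ := norm_pos_iff.2 ha
  obtain ⟨ψ, hψ, hα, hβ, hγ⟩ := exists_balanced_profile (μ := μ) hφ ht (div_pos hr ha0) hε
  have hu := hψ.smul_const a
  rw [image_union, image_pair] at hu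
  have hsmall : ∀ X ∈ (·.smulRight a) '' closedBall (0 : (ι → ℝ) →L[ℝ] ℝ) (r / ‖a‖),
      ξ + X ∈ K := by
    rintro _ ⟨χ, hχ, rfl⟩
    refine hrK ?_
    rw [mem_closedBall_iff_norm, add_sub_cancel_left, ContinuousLinearMap.norm_smulRight_apply]
    exact (le_div_iff₀ ha0).1 (mem_closedBall_zero_iff.1 hχ)
  have hX₁ : ((1 - t) • φ).smulRight a = (1 - t) • φ.smulRight a := by ext; simp [mul_smul]
  have hX₂ : (-(t • φ)).smulRight a = -(t • φ.smulRight a) := by ext; simp [mul_smul]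
  have hX : ((1 - t) • φ).smulRight a ≠ (-(t • φ)).smulRight a := fun h => hφ <| by
    ext x
    have hx : (1 - t) * φ x = -(t * φ x) := smul_left_injective ℝ ha (DFunLike.congr_fun h x)
    simpa using (by linarith : φ x = 0)
  obtain ⟨w, hw, hcost⟩ := hu.exists_refinement isOpen_ball hX hsmall
    (by rwa [hX₁]) (by rwa [hX₂, ← sub_eq_add_neg]) fun X hX => hg _ (hsmall X hX)
  refine hw.relaxedCost_le.trans ?_
  rw [setLAverage_eq]
  refine ENNReal.div_le_of_le_mul (hcost.trans ?_)
  rw [affineRegion_smul_const _ _ ha, affineRegion_smul_const _ _ ha, add_mul, add_mul, mul_assoc,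
    mul_assoc, mul_assoc]
  gcongr

theorem toReal_relaxedCost_smul_add_le (hK : IsOpen K) {D : ℝ≥0} (hg : ∀ A ∈ K, g A ≤ D)
    (hA : A ∈ K) (hB : B ∈ K) (hφ : φ ≠ 0) (ha : a ≠ 0) (hAB : A - B = φ.smulRight a)
    (ht : t ∈ Icc (0 : ℝ) 1) (hξ : t • A + (1 - t) • B ∈ K) :
    (relaxedCost μ K g (t • A + (1 - t) • B)).toReal ≤
      t * (relaxedCost μ K g A).toReal + (1 - t) * (relaxedCost μ K g B).toReal := by
  have hfin {A : (ι → ℝ) →L[ℝ] W} (hA : A ∈ K) : relaxedCost μ K g A ≠ ∞ :=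
    (((relaxedCost_le_of_mem hA).trans (hg A hA)).trans_lt ENNReal.coe_lt_top).ne
  set a' := (relaxedCost μ K g A).toReal
  set b' := (relaxedCost μ K g B).toReal
  have hε (ε : ℝ) (hε : 0 < ε) : (relaxedCost μ K g (t • A + (1 - t) • B)).toReal ≤
      (a' + ε) * (t + ε) + (b' + ε) * (1 - t + ε) + D * ε := by
    have hlt {A : (ι → ℝ) →L[ℝ] W} (hA : A ∈ K) :
        relaxedCost μ K g A < .ofReal ((relaxedCost μ K g A).toReal + ε) :=
      (ENNReal.lt_ofReal_iff_toReal_lt (hfin hA)).2 (lt_add_of_pos_right _ hε)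
    have : 0 ≤ a' := ENNReal.toReal_nonneg
    have : 0 ≤ b' := ENNReal.toReal_nonneg
    have ht₀ := ht.1
    have ht₁ := sub_nonneg.2 ht.2
    refine ENNReal.toReal_le_of_le_ofReal (by positivity) ?_
    rw [ENNReal.ofReal_add (by positivity) (by positivity),
      ENNReal.ofReal_add (by positivity) (by positivity), ENNReal.ofReal_mul (by positivity),
      ENNReal.ofReal_mul (by positivity), ENNReal.ofReal_mul (by positivity),
      ENNReal.ofReal_coe_nnreal]
    refine relaxedCost_le_of_relaxedCost_lt (hK.mem_nhds hξ) hg hφ ha ht ?_ ?_ hε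
    · rw [← hAB, show t • A + (1 - t) • B + (1 - t) • (A - B) = A by module]
      exact hlt hA
    · rw [← hAB, show t • A + (1 - t) • B - t • (A - B) = B by module]
      exact hlt hB
  have hlim : Tendsto (fun ε : ℝ => (a' + ε) * (t + ε) + (b' + ε) * (1 - t + ε) + D * ε) (𝓝[>] 0)
      (𝓝 (t * a' + (1 - t) * b')) :=
    tendsto_nhdsWithin_of_tendsto_nhds (Continuous.tendsto' (by fun_prop) _ _ (by ring))
  exact ge_of_tendsto hlim (eventually_mem_nhdsWithin.mono hε)

end Convexity

end RelaxedCost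

section DirectionalConvexity

open Metric Set Topology

variable {X : Type*} [NormedAddCommGroup X] [NormedSpace ℝ X] {R K U C M E : Set X} {q : X → ℝ}
  {c r ρ : ℝ} {x ξ : X}

/-- `q` is convex on `K` in the directions of `R`; this is rank-one convexity when `R` consists of
the rank-one matrices. Only the two endpoints and the point where the inequality is tested have to
lie in `K`, not the whole segment. -/
def DirConvexOn (R K : Set X) (q : X → ℝ) : Prop :=
  ∀ ⦃A⦄, A ∈ K → ∀ ⦃B⦄, B ∈ K → A - B ∈ R → ∀ ⦃t : ℝ⦄, t ∈ Icc 0 1 →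
    t • A + (1 - t) • B ∈ K → q (t • A + (1 - t) • B) ≤ t * q A + (1 - t) * q B

theorem smul_add_sum_mem_of_convex {ι : Type*} (hC : Convex ℝ C) {s : Finset ι} {m : ι → X}
    (hx : x ∈ C) (hm : ∀ i ∈ s, m i ∈ C) {t : ℝ} {w : ι → ℝ} (ht : 0 ≤ t)
    (hw : ∀ i ∈ s, 0 ≤ w i) (hsum : t + ∑ i ∈ s, w i = 1) :
    t • x + ∑ i ∈ s, w i • m i ∈ C := by
  have key := hC.sum_mem (t := Finset.insertNone s) (w := fun i => i.elim t w)
    (z := fun i => i.elim x m) (by simpa [Option.forall] using ⟨ht, hw⟩)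
    (by simpa [Finset.sum_insertNone] using hsum) (by simpa [Option.forall] using ⟨hx, hm⟩)
  simpa [Finset.sum_insertNone] using key

-- The points `m i` are split off one at a time, each time along a segment parallel to `x - m i`.
theorem DirConvexOn.le_smul_add_sum (hq : DirConvexOn R K q)
    (hR : ∀ v ∈ R, ∀ a : ℝ, 0 < a → a • v ∈ R) (hU : Convex ℝ U) (hUK : U ⊆ K)
    (hC : Convex ℝ C) (hCU : C ⊆ U) (hqC : ∀ y ∈ C, q y ≤ c) (hx : x ∈ U) {ι : Type*}
    {m : ι → X} {s : Finset ι} (hm : ∀ i ∈ s, m i ∈ C ∧ x - m i ∈ R) :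
    ∀ {t : ℝ} {w : ι → ℝ}, 0 < t → (∀ i ∈ s, 0 ≤ w i) → t + ∑ i ∈ s, w i = 1 →
      q (t • x + ∑ i ∈ s, w i • m i) ≤ t * q x + (1 - t) * c := by
  induction s using Finset.induction_on with
  | empty =>
    intro t w _ _ hsum
    obtain rfl : t = 1 := by simpa using hsum
    simp
  | insert i s hi ih =>
    intro t w ht hw hsum
    rw [Finset.forall_mem_insert] at hm hw
    rw [Finset.sum_insert hi] at hsum ⊢
    set a := t + w i with ha
    have ha0 : 0 < a := add_pos_of_pos_of_nonneg ht hw.1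
    have hsum' : a + ∑ j ∈ s, w j = 1 := by rw [ha, add_assoc, hsum]
    set A := a • x + ∑ j ∈ s, w j • m j with hA
    set B := a • m i + ∑ j ∈ s, w j • m j with hB
    have hAU : A ∈ U := smul_add_sum_mem_of_convex hU hx (fun j hj => hCU (hm.2 j hj).1) ha0.le
      hw.2 hsum'
    have hBC : B ∈ C := smul_add_sum_mem_of_convex hC hm.1.1 (fun j hj => (hm.2 j hj).1) ha0.le
      hw.2 hsum'
    have hAB : A - B ∈ R := by
      have hsub : A - B = a • (x - m i) := by rw [hA, hB]; module
      exact hsub ▸ hR _ hm.1.2 a ha0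
    have hta : t / a ∈ Icc (0 : ℝ) 1 :=
      ⟨by positivity, (div_le_one ha0).2 (le_add_of_nonneg_right hw.1)⟩
    have hpoint : t • x + (w i • m i + ∑ j ∈ s, w j • m j) = (t / a) • A + (1 - t / a) • B := by
      have hwa : w i = (1 - t / a) * a := by field_simp; linarith
      nth_rw 1 [hwa, ← div_mul_cancel₀ t ha0.ne', hA, hB]
      module
    have hle : q A ≤ a * q x + (1 - a) * c := ih hm.2 ha0 hw.2 hsum'
    calc q (t • x + (w i • m i + ∑ j ∈ s, w j • m j))
        ≤ t / a * q A + (1 - t / a) * q B := hpoint ▸ hq (hUK hAU) (hUK (hCU hBC)) hAB hta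
          (hUK (hU hAU (hCU hBC) hta.1 (sub_nonneg.2 hta.2) (by ring)))
      _ ≤ t / a * (a * q x + (1 - a) * c) + (1 - t / a) * c := by
          have := sub_nonneg.2 hta.2
          gcongr
          exact hqC B hBC
      _ = t * q x + (1 - t) * c := by field_simp; ring

theorem DirConvexOn.le_smul_add_smul (hq : DirConvexOn R K q)
    (hR : ∀ v ∈ R, ∀ a : ℝ, 0 < a → a • v ∈ R) (hU : Convex ℝ U) (hUK : U ⊆ K)
    (hC : Convex ℝ C) (hCU : C ⊆ U) (hqC : ∀ y ∈ C, q y ≤ c) (hx : x ∈ U)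
    (hM : ∀ m ∈ M, m ∈ C ∧ x - m ∈ R) {y : X} (hy : y ∈ convexHull ℝ M) {t : ℝ}
    (ht : t ∈ Ioc 0 1) : q (t • x + (1 - t) • y) ≤ t * q x + (1 - t) * c := by
  rw [mem_convexHull_iff_exists_fintype] at hy
  obtain ⟨ι, _, w, z, hw, hw1, hz, rfl⟩ := hy
  simp only [Finset.smul_sum, smul_smul]
  refine hq.le_smul_add_sum hR hU hUK hC hCU hqC hx (fun i _ => hM _ (hz i)) ht.1
    (fun i _ => mul_nonneg (sub_nonneg.2 ht.2) (hw i)) ?_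
  rw [← Finset.mul_sum, hw1]
  ring

-- Contracting the hull by a small amount `δ` towards `η` moves it into its own interior, where the
-- convexity of `q` may be used, and keeps `M` in the ball and `ξ` within `δ * ‖η - ξ‖` of `E`.
theorem DirConvexOn.le_of_contraction (hq : DirConvexOn R K q)
    (hR : ∀ v ∈ R, ∀ a : ℝ, 0 < a → a • v ∈ R) (hqE : ∀ x ∈ K, q x ≤ infDist x E) (hξ : ξ ∈ E)
    (hHK : interior (convexHull ℝ (insert ξ M)) ⊆ K) (hMR : ∀ m ∈ M, ξ - m ∈ R)
    (hMr : M ⊆ closedBall 0 r) (hqc : ∀ y ∈ ball 0 ρ, q y ≤ c) {y η : X}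
    (hy : y ∈ convexHull ℝ M) {t : ℝ} (ht : t ∈ Ioc 0 1) (hη_eq : t • ξ + (1 - t) • y = η)
    (hη : η ∈ interior (convexHull ℝ (insert ξ M))) {δ : ℝ} (hδ : δ ∈ Ioo 0 1)
    (hδρ : r + δ * ‖η‖ < ρ) : q η ≤ t * (δ * ‖η - ξ‖) + (1 - t) * c := by
  set H := convexHull ℝ (insert ξ M)
  have hH : Convex ℝ H := convex_convexHull ℝ _
  have hMH : insert ξ M ⊆ H := subset_convexHull ℝ _
  set h : X →ᵃ[ℝ] X := AffineMap.homothety η (1 - δ) with hh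
  have h_apply : ∀ x, h x = (1 - δ) • x + δ • η := fun x => by
    rw [hh, AffineMap.homothety_apply, vsub_eq_sub, vadd_eq_add]; module
  have h_mem : ∀ x ∈ insert ξ M, h x ∈ interior H := fun x hx => h_apply x ▸
    hH.combo_self_interior_mem_interior (hMH hx) hη (sub_nonneg.2 hδ.2.le) hδ.1
      (sub_add_cancel 1 δ)
  have h_ball : ∀ m ∈ M, h m ∈ ball 0 ρ := fun m hm => by
    have hm_norm : ‖m‖ ≤ r := mem_closedBall_zero_iff.1 (hMr hm)
    rw [mem_ball_zero_iff, h_apply]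
    refine (norm_add_le _ _).trans_lt (lt_of_le_of_lt ?_ hδρ)
    rw [norm_smul, norm_smul, Real.norm_of_nonneg hδ.1.le,
      Real.norm_of_nonneg (sub_nonneg.2 hδ.2.le)]
    nlinarith [norm_nonneg m, hδ.1]
  have h_dir : ∀ m ∈ M, h ξ - h m ∈ R := fun m hm => by
    have hsub : h ξ - h m = (1 - δ) • (ξ - m) := by rw [h_apply, h_apply]; module
    exact hsub ▸ hR _ (hMR m hm) _ (sub_pos.2 hδ.2)
  have hqξ : q (h ξ) ≤ δ * ‖η - ξ‖ := by
    have hsub : h ξ - ξ = δ • (η - ξ) := by rw [h_apply]; module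
    refine (hqE _ (hHK (h_mem ξ (mem_insert _ _)))).trans
      ((infDist_le_dist_of_mem hξ).trans_eq ?_)
    rw [dist_eq_norm, hsub, norm_smul, Real.norm_of_nonneg hδ.1.le]
  have h_η : t • h ξ + (1 - t) • h y = η := by
    rw [h_apply, h_apply, ← sub_eq_zero, ← hη_eq]; module
  have hle := hq.le_smul_add_smul hR hH.interior hHK (hH.interior.inter (convex_ball 0 ρ))
    inter_subset_left (fun z hz => hqc z hz.2) (h_mem ξ (mem_insert _ _))
    (forall_mem_image.2 fun m hm => ⟨⟨h_mem m (mem_insert_of_mem _ hm), h_ball m hm⟩, h_dir m hm⟩)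
    (h.image_convexHull M ▸ mem_image_of_mem h hy) ht
  rw [h_η] at hle
  exact hle.trans (by have := ht.1.le; gcongr)

theorem DirConvexOn.le_one_sub_mul (hq : DirConvexOn R K q)
    (hR : ∀ v ∈ R, ∀ a : ℝ, 0 < a → a • v ∈ R) (hqE : ∀ x ∈ K, q x ≤ infDist x E) (hξ : ξ ∈ E)
    (hHK : interior (convexHull ℝ (insert ξ M)) ⊆ K) (hMR : ∀ m ∈ M, ξ - m ∈ R) (hrρ : r < ρ)
    (hMr : M ⊆ closedBall 0 r) (hqc : ∀ y ∈ ball 0 ρ, q y ≤ c) {y η : X}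
    (hy : y ∈ convexHull ℝ M) {t : ℝ} (ht : t ∈ Ioc 0 1) (hη_eq : t • ξ + (1 - t) • y = η)
    (hη : η ∈ interior (convexHull ℝ (insert ξ M))) : q η ≤ (1 - t) * c := by
  have hδρ : ∀ᶠ δ : ℝ in 𝓝[>] 0, r + δ * ‖η‖ < ρ :=
    (Continuous.tendsto' (by fun_prop) 0 r (by simp)).mono_left nhdsWithin_le_nhds
      |>.eventually_lt_const hrρ
  have hlim : Tendsto (fun δ : ℝ => t * (δ * ‖η - ξ‖) + (1 - t) * c) (𝓝[>] 0)
      (𝓝 ((1 - t) * c)) :=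
    Tendsto.mono_left (Continuous.tendsto' (by fun_prop) 0 _ (by simp)) nhdsWithin_le_nhds
  refine ge_of_tendsto hlim ?_
  filter_upwards [Ioo_mem_nhdsGT one_pos, hδρ] with δ hδ hδρ
  exact hq.le_of_contraction hR hqE hξ hHK hMR hMr hqc hy ht hη_eq hη hδ hδρ

theorem DirConvexOn.exists_lt_one_le_mul [Nontrivial X] (hq : DirConvexOn R K q)
    (hR : ∀ v ∈ R, ∀ a : ℝ, 0 < a → a • v ∈ R) (hqE : ∀ x ∈ K, q x ≤ infDist x E) (hξ : ξ ∈ E)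
    (hHK : interior (convexHull ℝ (insert ξ M)) ⊆ K) (hMR : ∀ m ∈ M, ξ - m ∈ R) (hr : 0 ≤ r)
    (hrρ : r < ρ) (hMr : M ⊆ closedBall 0 r) (hc : 0 ≤ c) (hqc : ∀ y ∈ ball 0 ρ, q y ≤ c) :
    ∃ θ < 1, ∀ η ∈ interior (convexHull ℝ (insert ξ M)), ρ ≤ ‖η‖ → q η ≤ θ * c := by
  rcases M.eq_empty_or_nonempty with rfl | hM
  · exact ⟨0, one_pos, by simp⟩
  have hξ_pos : 0 < ‖ξ‖ + 1 := by positivity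
  refine ⟨1 - (ρ - r) / (‖ξ‖ + 1), sub_lt_self _ (div_pos (sub_pos.2 hrρ) hξ_pos),
    fun η hη hηρ => ?_⟩
  obtain ⟨t, ht, y, hy, hη_eq⟩ : ∃ t ∈ Icc (0 : ℝ) 1, ∃ y ∈ convexHull ℝ M,
      t • ξ + (1 - t) • y = η := by
    have hη_mem := interior_subset hη
    rw [convexHull_insert hM, mem_convexJoin] at hη_mem
    obtain ⟨_, rfl, y, hy, a, b, ha, hb, hab, hη_eq⟩ := hη_mem
    exact ⟨a, ⟨ha, by linarith⟩, y, hy, by rwa [← hab, add_sub_cancel_left]⟩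
  have hyr : ‖y‖ ≤ r :=
    mem_closedBall_zero_iff.1 (convexHull_min hMr (convex_closedBall 0 r) hy)
  have hweight : ρ - r ≤ t * (‖ξ‖ + 1) := by
    have hnorm : ‖η‖ ≤ t * ‖ξ‖ + (1 - t) * ‖y‖ := by
      rw [← hη_eq]
      refine (norm_add_le _ _).trans_eq ?_
      rw [norm_smul, norm_smul, Real.norm_of_nonneg ht.1, Real.norm_of_nonneg (sub_nonneg.2 ht.2)]
    nlinarith [ht.1, ht.2]
  have ht0 : 0 < t := pos_of_mul_pos_left ((sub_pos.2 hrρ).trans_le hweight) hξ_pos.le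
  have hle := hq.le_one_sub_mul hR hqE hξ hHK hMR hrρ hMr hqc hy ⟨ht0, ht.2⟩ hη_eq hη
  exact hle.trans (by gcongr; exact (div_le_iff₀ hξ_pos).2 hweight)

theorem exists_finite_mem_interior_convexHull [FiniteDimensional ℝ X] {S : Set X}
    (hx : x ∈ interior (convexHull ℝ S)) :
    ∃ T ⊆ S, T.Finite ∧ x ∈ interior (convexHull ℝ T) := by
  obtain ⟨b, hxb, hbS⟩ :=
    exists_mem_interior_convexHull_affineBasis (mem_interior_iff_mem_nhds.1 hx)
  have hvertex : ∀ i, ∃ T : Finset X, ↑T ⊆ S ∧ b i ∈ convexHull ℝ (T : Set X) := fun i => by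
    have hi := hbS (subset_convexHull ℝ _ (mem_range_self i))
    rw [convexHull_eq_union_convexHull_finite_subsets] at hi
    simpa using hi
  choose T hTS hbT using hvertex
  refine ⟨⋃ i, T i, iUnion_subset hTS, finite_iUnion fun i => (T i).finite_toSet,
    interior_mono (convexHull_min ?_ (convex_convexHull ℝ _)) hxb⟩
  rintro _ ⟨i, rfl⟩
  exact convexHull_mono (subset_iUnion (fun i => (T i : Set X)) i) (hbT i)

theorem exists_pos_norm_add_smul_eq {v : X} (hv : v ≠ 0) (hx : ‖x‖ < ρ) :
    ∃ s : ℝ, 0 < s ∧ ‖x + s • v‖ = ρ := by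
  have hcont : Continuous fun s : ℝ => ‖x + s • v‖ := by fun_prop
  have hv' : 0 < ‖v‖ := norm_pos_iff.2 hv
  set b := 2 * ρ / ‖v‖ with hb
  have hb0 : 0 ≤ b := by have := (norm_nonneg x).trans hx.le; positivity
  have hfar : ρ ≤ ‖x + b • v‖ := by
    have hbv : ‖b • v‖ = 2 * ρ := by
      rw [norm_smul, Real.norm_of_nonneg hb0, hb, div_mul_cancel₀ _ hv'.ne']
    have := norm_sub_le (x + b • v) x
    rw [add_sub_cancel_left, hbv] at this
    linarith
  obtain ⟨s, hs, hsρ⟩ := intermediate_value_Icc hb0 hcont.continuousOn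
    ⟨by simpa using hx.le, hfar⟩
  refine ⟨s, hs.1.lt_of_ne ?_, hsρ⟩
  rintro rfl
  simp [hx.ne] at hsρ

theorem DirConvexOn.le_of_sphere_le (hq : DirConvexOn R K q)
    (hR : ∀ v ∈ R, ∀ a : ℝ, 0 < a → a • v ∈ R) {v : X} (hvR : v ∈ R) (hv : v ≠ 0)
    (hK : closedBall 0 ρ ⊆ K) (hqc : ∀ y ∈ sphere 0 ρ, q y ≤ c) (hx : x ∈ ball 0 ρ) : q x ≤ c := by
  have hxρ := mem_ball_zero_iff.1 hx
  obtain ⟨a, ha, haρ⟩ := exists_pos_norm_add_smul_eq hv hxρ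
  obtain ⟨b, hb, hbρ⟩ := exists_pos_norm_add_smul_eq (neg_ne_zero.2 hv) hxρ
  have hA : x + a • v ∈ sphere 0 ρ := mem_sphere_zero_iff_norm.2 haρ
  have hB : x + b • -v ∈ sphere 0 ρ := mem_sphere_zero_iff_norm.2 hbρ
  have hAB : (x + a • v) - (x + b • -v) ∈ R := by
    have hsub : (x + a • v) - (x + b • -v) = (a + b) • v := by module
    exact hsub ▸ hR v hvR _ (by positivity)
  set t := b / (a + b) with ht
  have ht_mem : t ∈ Icc (0 : ℝ) 1 := ⟨by positivity, (div_le_one (by positivity)).2 (by linarith)⟩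
  have hx_eq : t • (x + a • v) + (1 - t) • (x + b • -v) = x := by
    have hzero : t * a - (1 - t) * b = 0 := by rw [ht]; field_simp; ring
    calc t • (x + a • v) + (1 - t) • (x + b • -v) = x + (t * a - (1 - t) * b) • v := by module
      _ = x := by rw [hzero, zero_smul, add_zero]
  have hle := hq (hK (sphere_subset_closedBall hA)) (hK (sphere_subset_closedBall hB)) hAB ht_mem
    (hx_eq.symm ▸ hK (ball_subset_closedBall hx))
  rw [hx_eq] at hle
  nlinarith [hqc _ hA, hqc _ hB, ht_mem.1, ht_mem.2]

theorem DirConvexOn.exists_lt_one_eventually_le_mul [FiniteDimensional ℝ X] [Nontrivial X]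
    (hq : DirConvexOn R K q) (hR : ∀ v ∈ R, ∀ a : ℝ, 0 < a → a • v ∈ R)
    (hqE : ∀ x ∈ K, q x ≤ infDist x E) (hξ : ξ ∈ E)
    (hHK : interior (convexHull ℝ (insert ξ M)) ⊆ K) (hMR : ∀ m ∈ M, ξ - m ∈ R) (hρ : 0 < ρ)
    (hMρ : M ⊆ ball 0 ρ) (hc : 0 ≤ c) (hqc : ∀ y ∈ ball 0 ρ, q y ≤ c)
    (hx : x ∈ interior (convexHull ℝ (insert ξ M))) :
    ∃ θ < 1, ∀ᶠ η in 𝓝 x, ρ ≤ ‖η‖ → q η ≤ θ * c := by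
  obtain ⟨T, hTM, hT, hxT⟩ := exists_finite_mem_interior_convexHull hx
  obtain ⟨r, hr, hTr⟩ := exists_pos_lt_subset_ball hρ (hT.inter_of_left M).isClosed
    (inter_subset_right.trans hMρ)
  have hT_sub : T ⊆ insert ξ (T ∩ M) := fun m hm => (hTM hm).imp_right fun hmM => ⟨hm, hmM⟩
  have hsub : interior (convexHull ℝ (insert ξ (T ∩ M))) ⊆ K :=
    (interior_mono (convexHull_mono (insert_subset_insert inter_subset_right))).trans hHK
  obtain ⟨θ, hθ, hle⟩ := hq.exists_lt_one_le_mul hR hqE hξ hsub (fun m hm => hMR m hm.2) hr.1.le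
    hr.2 (hTr.trans ball_subset_closedBall) hc hqc
  exact ⟨θ, hθ, (isOpen_interior.eventually_mem (interior_mono (convexHull_mono hT_sub) hxT)).mono
    hle⟩

theorem exists_lt_one_le_mul_of_isCompact {Y : Type*} [TopologicalSpace Y] {s : Set Y}
    (hs : IsCompact s) {f : Y → ℝ} (hc : 0 ≤ c)
    (hlocal : ∀ y ∈ s, ∃ θ < 1, ∀ᶠ z in 𝓝[s] y, f z ≤ θ * c) :
    ∃ θ < 1, ∀ y ∈ s, f y ≤ θ * c := by
  refine hs.induction_on (p := fun s => ∃ θ < 1, ∀ y ∈ s, f y ≤ θ * c) ⟨0, one_pos, by simp⟩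
    ?_ ?_ ?_
  · rintro s t hst ⟨θ, hθ, hle⟩
    exact ⟨θ, hθ, fun y hy => hle y (hst hy)⟩
  · rintro s t ⟨θ, hθ, hle⟩ ⟨θ', hθ', hle'⟩
    refine ⟨max θ θ', max_lt hθ hθ', fun y hy => ?_⟩
    rcases hy with hy | hy
    · exact (hle y hy).trans (by gcongr; exact le_max_left _ _)
    · exact (hle' y hy).trans (by gcongr; exact le_max_right _ _)
  · intro y hy
    obtain ⟨θ, hθ, hle⟩ := hlocal y hy
    exact ⟨_, hle, θ, hθ, fun _ => id⟩

theorem nonpos_of_local_contraction {Y : Type*} [TopologicalSpace Y] {s : Set Y}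
    (hs : IsCompact s) {f : Y → ℝ} (hbdd : BddAbove (f '' s))
    (hlocal : ∀ c > 0, (∀ y ∈ s, f y ≤ c) → ∀ y ∈ s, ∃ θ < 1, ∀ᶠ z in 𝓝[s] y, f z ≤ θ * c) :
    ∀ y ∈ s, f y ≤ 0 := by
  intro y hy
  set c := sSup (f '' s)
  have hfc : ∀ z ∈ s, f z ≤ c := fun z hz => le_csSup hbdd (mem_image_of_mem f hz)
  refine (hfc y hy).trans (not_lt.1 fun hc => ?_)
  obtain ⟨θ, hθ, hle⟩ := exists_lt_one_le_mul_of_isCompact hs hc.le (hlocal c hc hfc)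
  have hcθ : c ≤ θ * c := csSup_le ⟨f y, mem_image_of_mem f hy⟩ (forall_mem_image.2 hle)
  nlinarith

theorem DirConvexOn.nonpos_of_sphere_subset [FiniteDimensional ℝ X] (hq : DirConvexOn R K q)
    (hR : ∀ v ∈ R, ∀ a : ℝ, 0 < a → a • v ∈ R) {v : X} (hvR : v ∈ R) (hv : v ≠ 0)
    (hqE : ∀ x ∈ K, q x ≤ infDist x E) (hρ : 0 < ρ) {M : X → Set X}
    (hMR : ∀ ξ ∈ E, ∀ m ∈ M ξ, ξ - m ∈ R) (hMρ : ∀ ξ ∈ E, M ξ ⊆ ball 0 ρ)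
    (hsphere : sphere 0 ρ ⊆ ⋃ ξ ∈ E, interior (convexHull ℝ (insert ξ (M ξ))))
    (hK : K = ball 0 ρ ∪ ⋃ ξ ∈ E, interior (convexHull ℝ (insert ξ (M ξ)))) (hx : x ∈ K) :
    q x ≤ 0 := by
  have : Nontrivial X := ⟨v, 0, hv⟩
  have hHK : ∀ ξ ∈ E, interior (convexHull ℝ (insert ξ (M ξ))) ⊆ K := fun ξ hξ =>
    hK ▸ (subset_iUnion₂ (s := fun ξ _ => interior (convexHull ℝ (insert ξ (M ξ)))) ξ hξ).trans
      subset_union_right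
  have hballK : closedBall 0 ρ ⊆ K := by
    rw [hK, ← ball_union_sphere]
    exact union_subset_union_right _ hsphere
  have hball : ∀ {c}, (∀ y ∈ sphere 0 ρ, q y ≤ c) → ∀ y ∈ ball 0 ρ, q y ≤ c := fun hqc y hy =>
    hq.le_of_sphere_le hR hvR hv hballK hqc hy
  have hlocal : ∀ {c}, 0 ≤ c → (∀ y ∈ sphere 0 ρ, q y ≤ c) → ∀ ξ ∈ E,
      ∀ y ∈ interior (convexHull ℝ (insert ξ (M ξ))),
        ∃ θ < 1, ∀ᶠ η in 𝓝 y, ρ ≤ ‖η‖ → q η ≤ θ * c := fun hc hqc ξ hξ y hy =>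
    hq.exists_lt_one_eventually_le_mul hR hqE hξ (hHK ξ hξ) (hMR ξ hξ) hρ (hMρ ξ hξ) hc
      (hball hqc) hy
  have hbdd : BddAbove (q '' sphere 0 ρ) := by
    obtain ⟨D, hD⟩ := (isCompact_sphere (0 : X) ρ).bddAbove_image
      (continuous_infDist_pt E).continuousOn
    refine ⟨D, forall_mem_image.2 fun y hy => ?_⟩
    exact (hqE y (hballK (sphere_subset_closedBall hy))).trans (hD (mem_image_of_mem _ hy))
  have hqsphere : ∀ y ∈ sphere 0 ρ, q y ≤ 0 := by
    refine nonpos_of_local_contraction (isCompact_sphere 0 ρ) hbdd fun c hc hqc y hy => ?_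
    obtain ⟨ξ, hξ, hyξ⟩ := mem_iUnion₂.1 (hsphere hy)
    obtain ⟨θ, hθ, hle⟩ := hlocal hc.le hqc ξ hξ y hyξ
    refine ⟨θ, hθ, ?_⟩
    filter_upwards [self_mem_nhdsWithin, hle.filter_mono nhdsWithin_le_nhds] with η hη hle
    exact hle (mem_sphere_zero_iff_norm.1 hη).ge
  rcases lt_or_ge ‖x‖ ρ with hxρ | hxρ
  · exact hball hqsphere x (mem_ball_zero_iff.2 hxρ)
  · have hx_notMem : x ∉ ball 0 ρ := by simpa using hxρ
    obtain ⟨ξ, hξ, hxξ⟩ := mem_iUnion₂.1 ((hK ▸ hx).resolve_left hx_notMem)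
    obtain ⟨θ, -, hle⟩ := hlocal le_rfl hqsphere ξ hξ x hxξ
    simpa using hle.self_of_nhds hxρ

end DirectionalConvexity

section RelaxingSequence

open Metric Set Topology
open scoped NNReal ENNReal

variable {V W : Type*} [NormedAddCommGroup V] [NormedSpace ℝ V] [FiniteDimensional ℝ V]
  [MeasurableSpace V] [BorelSpace V] [NormedAddCommGroup W] [NormedSpace ℝ W]
  [FiniteDimensional ℝ W] {μ : Measure V} [μ.IsAddHaarMeasure] {K : Set (V →L[ℝ] W)}
  {g : (V →L[ℝ] W) → ℝ≥0∞} {ξ : V →L[ℝ] W} {Ω : Set V}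

theorem exists_isPerturbation_lintegral_le {R : ℝ≥0} (hK : {A | ξ + A ∈ K} ⊆ closedBall 0 R)
    (hΩ : IsOpen Ω) {c : ℝ≥0∞} (hc : relaxedCost μ K g ξ < c) {ε : ℝ} (hε : 0 < ε) :
    ∃ p, IsPerturbation μ Ω {A | ξ + A ∈ K} p ∧ LipschitzWith (2 * R) p ∧ (∀ x, ‖p x‖ ≤ ε) ∧
      ∫⁻ x in Ω, g (ξ + fderiv ℝ p x) ∂μ ≤ c * μ Ω := by
  obtain ⟨w, hw'⟩ := iInf_lt_iff.1 hc
  obtain ⟨hw, hcost⟩ := iInf_lt_iff.1 hw'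
  obtain ⟨p, hp, hpL, hpε, h_int⟩ :=
    hw.exists_rescaled_copies (hw.lipschitzWith_of_subset_closedBall hK) hΩ hε
  exact ⟨p, hp, hpL, hpε, (h_int fun A => g (ξ + A)).trans_le (by gcongr)⟩

theorem exists_relaxing_sequence (hK : Bornology.IsBounded K) (hξ : relaxedCost μ K g ξ = 0)
    (b : W) (hΩ : IsOpen Ω) (hμΩ : μ Ω ≠ ∞) :
    ∃ (L : ℝ≥0) (u : ℕ → V → W), (∀ ν, IsPiecewiseAffine (μ.restrict Ω) K (u ν)) ∧
      (∀ ν, LipschitzWith L (u ν)) ∧ (∀ ν, ∀ x ∉ Ω, u ν x = ξ x + b) ∧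
      TendstoUniformly u (fun x => ξ x + b) atTop ∧
      Tendsto (fun ν => ∫⁻ x in Ω, g (fderiv ℝ (u ν) x) ∂μ) atTop (𝓝 0) := by
  obtain ⟨R, hR⟩ : ∃ R : ℝ≥0, {A | ξ + A ∈ K} ⊆ closedBall 0 R := by
    obtain ⟨R, hR, hKR⟩ := hK.exists_pos_norm_le
    refine ⟨⟨R + ‖ξ‖, by positivity⟩, fun A hA => mem_closedBall_zero_iff.2 ?_⟩
    calc ‖A‖ = ‖(ξ + A) - ξ‖ := by rw [add_sub_cancel_left]
      _ ≤ R + ‖ξ‖ := norm_sub_le_of_le (hKR _ hA) le_rfl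
  obtain ⟨ε, -, hε, hε₀⟩ := exists_seq_strictAnti_tendsto (0 : ℝ)
  choose p hp hpL hpε h_int using fun ν =>
    exists_isPerturbation_lintegral_le hR hΩ
      (hξ.trans_lt (ENNReal.ofReal_pos.2 (hε ν)) : _ < ENNReal.ofReal (ε ν)) (hε ν)
  have hu (ν : ℕ) : IsPiecewiseAffine (μ.restrict Ω) K fun x => ξ x + b + p ν x :=
    (hp ν).toIsPiecewiseAffine.affine_add b
  refine ⟨‖ξ‖₊ + 0 + 2 * R, fun ν x => ξ x + b + p ν x, hu,
    fun ν => (ξ.lipschitz.add (.const b)).add (hpL ν), fun ν x hx => ?_, ?_, ?_⟩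
  · simp only [(hp ν).eq_zero_of_notMem x hx, add_zero]
  · rw [Metric.tendstoUniformly_iff]
    intro δ hδ
    filter_upwards [hε₀.eventually_lt_const hδ] with ν hν x
    rw [dist_self_add_right]
    exact (hpε ν x).trans_lt hν
  · have hlim : Tendsto (fun ν => ENNReal.ofReal (ε ν) * μ Ω) atTop (𝓝 0) := by
      simpa using ENNReal.Tendsto.mul_const (ENNReal.tendsto_ofReal hε₀) (.inr hμΩ)
    refine tendsto_of_tendsto_of_tendsto_of_le_of_le tendsto_const_nhds hlim (fun _ => zero_le)
      fun ν => (lintegral_congr_ae ?_).trans_le (h_int ν)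
    filter_upwards [(hp ν).ae_germ] with x ⟨A, _, hA⟩
    have hgrad : fderiv ℝ (fun x => ξ x + b + p ν x) x = ξ + A :=
      ((HasAffineGermAt.of_affine ξ b x).add hA).fderiv_eq
    rw [hA.fderiv_eq, hgrad]

end RelaxingSequence

section Matrices

open Metric Set Topology Function
open scoped NNReal ENNReal

theorem exists_eq_smulRight_of_finrank_range_eq_one {V W : Type*} [NormedAddCommGroup V]
    [NormedSpace ℝ V] [NormedAddCommGroup W] [NormedSpace ℝ W] {T : V →L[ℝ] W}
    (hT : Module.finrank ℝ T.range = 1) :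
    ∃ φ : V →L[ℝ] ℝ, φ ≠ 0 ∧ ∃ a : W, a ≠ 0 ∧ T = φ.smulRight a := by
  obtain ⟨⟨_, y, rfl⟩, ha, hspan⟩ := finrank_eq_one_iff'.1 hT
  replace ha : T y ≠ 0 := fun h => ha (Subtype.ext h)
  obtain ⟨L, hL⟩ := SeparatingDual.exists_eq_one (R := ℝ) ha
  refine ⟨L ∘L T, fun h => one_ne_zero (hL.symm.trans (DFunLike.congr_fun h y)), T y, ha, ?_⟩
  ext1 x
  obtain ⟨c, hc⟩ := hspan ⟨T x, x, rfl⟩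
  replace hc : c • T y = T x := congrArg Subtype.val hc
  rw [ContinuousLinearMap.smulRight_apply, ContinuousLinearMap.comp_apply, ← hc, map_smul, hL,
    smul_eq_mul, mul_one]

variable {N n : ℕ}

theorem rank_single_one (i : Fin N) (j : Fin n) : (Matrix.single i j (1 : ℝ)).rank = 1 := by
  refine le_antisymm ?_ (Submodule.one_le_finrank_iff.2 fun h => ?_)
  · rw [Matrix.single_eq_single_vecMulVec_single]
    exact Matrix.rank_vecMulVec_le _ _
  · have hcol := congrFun (LinearMap.congr_fun (LinearMap.range_eq_bot.1 h) (Pi.single j 1)) i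
    simp at hcol

/-- Matrices as continuous linear maps `x ↦ A x`; `matGrad` is its inverse applied to `fderiv`. -/
noncomputable def matCLM (N n : ℕ) : Mat N n ≃L[ℝ] (Fin n → ℝ) →L[ℝ] Fin N → ℝ :=
  (Matrix.toLin' ≪≫ₗ LinearMap.toContinuousLinearMap).toContinuousLinearEquiv

theorem matCLM_apply (A : Mat N n) (x : Fin n → ℝ) : matCLM N n A x = A.mulVec x :=
  rfl

theorem IsPiecewiseAffine.piecewiseAffineOn {Γ : Set ((Fin n → ℝ) →L[ℝ] Fin N → ℝ)}
    {u : (Fin n → ℝ) → Fin N → ℝ} {Ω : Set (Fin n → ℝ)} (hΩ : IsOpen Ω)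
    (hu : IsPiecewiseAffine (volume.restrict Ω) Γ u) : PiecewiseAffineOn u Ω := by
  obtain ⟨⟨C, hC⟩, hgerm⟩ := hu
  set S : Set (Fin n → ℝ) := {x | ∃ A, HasAffineGermAt u A x}
  have hS : volume (Ω \ S) = 0 := by
    rw [ae_restrict_iff' hΩ.measurableSet, ae_iff] at hgerm
    refine measure_mono_null (fun x hx => ?_) hgerm
    exact Classical.not_imp.2 ⟨hx.1, fun ⟨A, _, hA⟩ => hx.2 ⟨A, hA⟩⟩
  have hsmall : ∀ x ∈ Ω ∩ S, ∀ᶠ r : ℝ in 𝓝[>] 0, ball x r ⊆ Ω ∧ AffineOn u (ball x r) := by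
    rintro x ⟨hx, A, b, hA⟩
    obtain ⟨δ, hδ, hball⟩ := Metric.mem_nhds_iff.1 (inter_mem (hΩ.mem_nhds hx) hA)
    filter_upwards [Ioo_mem_nhdsGT hδ] with r hr
    have hr' : ball x r ⊆ Ω ∩ {y | u y = A y + b} := (ball_subset_ball hr.2.le).trans hball
    exact ⟨hr'.trans inter_subset_left, (matCLM N n).symm A, b, fun y hy => by
      rw [← matCLM_apply, ContinuousLinearEquiv.apply_symm_apply]
      exact (hr' hy).2⟩
  obtain ⟨t, r, ht, hr, hdisj, hnull⟩ := exists_ae_cover_ball (μ := volume) hsmall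
  have := Encodable.ofCountable t
  have hpiece (k : ℕ) : let P := ⋃ x ∈ Encodable.decode₂ t k, ball (x : Fin n → ℝ) (r x)
      IsOpen P ∧ P ⊆ Ω ∧ AffineOn u P :=
    Encodable.iUnion_decode₂_cases (C := fun P => IsOpen P ∧ P ⊆ Ω ∧ AffineOn u P)
      ⟨isOpen_empty, empty_subset Ω, 0, 0, by simp⟩ fun x => ⟨isOpen_ball, (hr x).2.2⟩
  refine ⟨hC.continuous.continuousOn, _, fun k => (hpiece k).1, fun k => (hpiece k).2.1,
    fun k l hkl => Encodable.iUnion_decode₂_disjoint_on hdisj hkl, ?_, fun k => (hpiece k).2.2⟩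
  rw [Encodable.iUnion_decode₂]
  refine measure_mono_null (fun x hx => ?_) (measure_union_null hS hnull)
  by_cases hxS : x ∈ S
  · exact Or.inr ⟨⟨hx.1, hxS⟩, hx.2⟩
  · exact Or.inl ⟨hx.1, hxS⟩

/-- The least average distance to `E` among the gradients of piecewise affine maps on the unit ball
that have gradients in `K` and boundary values `x ↦ ξ x`. -/
noncomputable def relaxedDist (K E : Set (Mat N n)) (ξ : Mat N n) : ℝ≥0∞ :=
  relaxedCost volume ((matCLM N n).symm ⁻¹' K)
    (fun A => ENNReal.ofReal (infDist ((matCLM N n).symm A) E)) (matCLM N n ξ)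

variable {K E : Set (Mat N n)} {ξ : Mat N n}

theorem relaxedDist_le_infDist (hξ : ξ ∈ K) :
    relaxedDist K E ξ ≤ ENNReal.ofReal (infDist ξ E) := by
  simpa [relaxedDist] using relaxedCost_le_of_mem (μ := volume) (K := (matCLM N n).symm ⁻¹' K)
    (g := fun A => ENNReal.ofReal (infDist ((matCLM N n).symm A) E)) (ξ := matCLM N n ξ) (by simpa)

theorem dirConvexOn_toReal_relaxedDist (hK : IsOpen K) (hKb : Bornology.IsBounded K) :
    DirConvexOn {A : Mat N n | A.rank = 1} K fun ξ => (relaxedDist K E ξ).toReal := by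
  intro A hA B hB hAB t ht hξ
  obtain ⟨D, hD⟩ := ((lipschitz_infDist_pt E).isBounded_image hKb).bddAbove
  obtain ⟨φ, hφ, a, ha, hφa⟩ := exists_eq_smulRight_of_finrank_range_eq_one
    (T := matCLM N n (A - B)) hAB
  have hconv := toReal_relaxedCost_smul_add_le (μ := volume) (K := (matCLM N n).symm ⁻¹' K)
    (g := fun A => ENNReal.ofReal (infDist ((matCLM N n).symm A) E)) (A := matCLM N n A)
    (B := matCLM N n B) (hK.preimage (matCLM N n).symm.continuous) (D := D.toNNReal)
    (fun C hC => ENNReal.ofReal_le_ofReal (hD (mem_image_of_mem _ hC))) (by simpa) (by simpa)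
    hφ ha (by rw [← map_sub, hφa]) ht (by simpa using hξ)
  simpa only [relaxedDist, map_add, map_smul] using hconv

theorem hasRelaxationProperty_of_relaxedDist_eq_zero (hK : Bornology.IsBounded K)
    (h : ∀ ξ ∈ K, relaxedDist K E ξ = 0) : HasRelaxationProperty K E := by
  intro Ω hΩ hΩb ξ hξ b
  have hKb : Bornology.IsBounded ((matCLM N n).symm ⁻¹' K) := by
    rw [← ContinuousLinearEquiv.image_eq_preimage_symm]
    exact (matCLM N n).lipschitz.isBounded_image hK
  obtain ⟨L, u, hu, huL, hbd, hunif, h_int⟩ :=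
    exists_relaxing_sequence hKb (h ξ hξ) b hΩ hΩb.measure_lt_top.ne
  have hgrad (ν : ℕ) : ∀ᵐ x ∂volume.restrict Ω, matGrad (u ν) x ∈ K := (hu ν).ae_fderiv_mem
  refine ⟨u, fun ν => (hu ν).piecewiseAffineOn hΩ,
    fun ν => ⟨⟨L, (huL ν).lipschitzOnWith⟩, fun x hx => hbd ν x ?_⟩,
    fun ν => (hgrad ν).mono fun x => Or.inr, ⟨L, fun ν => (huL ν).lipschitzOnWith⟩,
    hunif.tendstoUniformlyOn, ?_⟩
  · exact (hΩ.frontier_eq ▸ hx).2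
  · refine squeeze_zero_norm (fun ν => norm_integral_le_lintegral_norm _) ?_
    simp only [Real.norm_of_nonneg infDist_nonneg]
    exact (ENNReal.tendsto_toReal ENNReal.zero_ne_top).comp h_int

end Matrices

section Statements

open Metric Set

theorem stmt18_general {N n : ℕ} (hN : 0 < N) (hn : 0 < n) {E : Set (Mat N n)}
    (hE : Bornology.IsBounded E) {ρ : ℝ} (hρ : 0 < ρ) {M : Mat N n → Set (Mat N n)}
    (hM1 : ∀ ξ ∈ E, M ξ ⊆ {η : Mat N n | (η - ξ).rank = 1})
    (hM2 : ∀ ξ ∈ E, M ξ ⊆ ball (0 : Mat N n) ρ)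
    (hM3 : sphere (0 : Mat N n) ρ ⊆ ⋃ ξ ∈ E, interior (convexHull ℝ ({ξ} ∪ M ξ)))
    {K : Set (Mat N n)}
    (hKdef : K = ball (0 : Mat N n) ρ ∪ ⋃ ξ ∈ E, interior (convexHull ℝ ({ξ} ∪ M ξ))) :
    IsOpen K ∧ Bornology.IsBounded K ∧ HasRelaxationProperty K E := by
  have hK : IsOpen K :=
    hKdef ▸ isOpen_ball.union (isOpen_biUnion fun _ _ => isOpen_interior)
  have hKb : Bornology.IsBounded K := by
    have hunion : Bornology.IsBounded (E ∪ ball 0 ρ) := hE.union isBounded_ball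
    refine (isBounded_convexHull.2 hunion).subset (hKdef.trans_subset (union_subset
      (subset_union_right.trans (subset_convexHull ℝ _)) (iUnion₂_subset fun ξ hξ => ?_)))
    exact interior_subset.trans (convexHull_mono
      (union_subset_union (singleton_subset_iff.2 hξ) (hM2 ξ hξ)))
  have hsmul {c : ℝ} (hc : c ≠ 0) (A : Mat N n) : (c • A).rank = A.rank :=
    Matrix.rank_smul_of_mem_nonZeroDivisors A (mem_nonZeroDivisors_of_ne_zero hc)
  have hv := rank_single_one (⟨0, hN⟩ : Fin N) (⟨0, hn⟩ : Fin n)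
  refine ⟨hK, hKb, hasRelaxationProperty_of_relaxedDist_eq_zero hKb fun ξ hξ => ?_⟩
  have hle : (relaxedDist K E ξ).toReal ≤ 0 :=
    (dirConvexOn_toReal_relaxedDist hK hKb).nonpos_of_sphere_subset
      (fun A hA a ha => (hsmul ha.ne' A).trans hA) hv
      (fun h => by simp [h] at hv)
      (fun η hη => ENNReal.toReal_le_of_le_ofReal infDist_nonneg (relaxedDist_le_infDist hη)) hρ
      (fun ξ hξ η hη => ?_) hM2 hM3 hKdef hξ
  · exact (ENNReal.toReal_eq_zero_iff _).1 (hle.antisymm ENNReal.toReal_nonneg) |>.resolve_right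
      ((relaxedDist_le_infDist hξ).trans_lt ENNReal.ofReal_lt_top).ne
  · rw [mem_ofPred, ← neg_sub, ← neg_one_smul ℝ, hsmul (by norm_num)]
    exact hM1 ξ hξ hη

theorem stmt18 {N n : ℕ} (hN : 2 ≤ N) (hn : 2 ≤ n) (m : ℕ) (ξs : Fin m → Mat N n)
    (E : Set (Mat N n)) (hE : E = Set.range ξs)
    (hdist : ∀ ξ ∈ E, 0 < Metric.infDist ξ (Metric.ball (0 : Mat N n) (1/2)))
    (M : Mat N n → Set (Mat N n))
    (hM1 : ∀ ξ ∈ E, M ξ ⊆ {η : Mat N n | (η - ξ).rank = 1})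
    (hM2 : ∀ ξ ∈ E, M ξ ⊆ Metric.ball (0 : Mat N n) (1/2) ∧ (M ξ).Finite ∧
      (M ξ).ncard < 4 * N * n)
    (hM3 : Metric.sphere (0 : Mat N n) (1/2) ⊆
      ⋃ ξ ∈ E, interior (convexHull ℝ ({ξ} ∪ M ξ)))
    (K : Set (Mat N n))
    (hKdef : K = Metric.ball (0 : Mat N n) (1/2) ∪
      ⋃ ξ ∈ E, interior (convexHull ℝ ({ξ} ∪ M ξ))) :
    IsOpen K ∧ Bornology.IsBounded K ∧ HasRelaxationProperty K E :=
  stmt18_general (by lia) (by lia) (hE ▸ (Set.finite_range ξs).isBounded) one_half_pos hM1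
    (fun ξ hξ => (hM2 ξ hξ).1) hM3 hKdef

end Statements
end

section
/- Let E ⊂ ℝ^{N×n} be compact and let U be an open bounded set with E ⊆ U. Define g : U → ℝ by g(η) := inf{ Σ_{i=1}^I μ_i dist(η_i; E) : I ∈ ℕ, (μ_i, η_i)_{1≤i≤I} with μ_i > 0, Σ_{i=1}^I μ_i = 1, satisfying (H_I(U)), and Σ_{i=1}^I μ_i η_i = η }. Then 0 ≤ g(η) < +∞ for every η ∈ U, g vanishes on E, and g is rank one convex on U in the following sense: for all A, B ∈ U with rank(A−B) = 1 such that λA + (1−λ)B ∈ U for every λ ∈ (0,1), one has g(λA + (1−λ)B) ≤ λ g(A) + (1−λ) g(B) for all λ ∈ [0,1]. -/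
open MeasureTheory Filter

attribute [local instance] Classical.propDecidable
attribute [local instance] Matrix.frobeniusNormedAddCommGroup Matrix.frobeniusNormedSpace

section Statements

open Metric Set

/-!
Identify a family with its list of weighted matrices. The relation `(H_I(U))` survives replacing an
atom `(s, ξ)` by a family of barycenter `ξ` whose weights are rescaled to total `s`: first collapse
the new family to `(s, ξ)`, then carry on as before. Starting from the two-atom family
`(t, A), (1 - t, B)` with `A - B` of rank one, replace `A` and `B` by competitors for `g A` and
`g B`. So `t • S A + (1 - t) • S B ⊆ S (t • A + (1 - t) • B)`, where `S` denotes the set of which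
`g` is the infimum, and taking infima gives convexity along rank one segments.
-/

theorem matrix_rank_neg {m n R : Type*} [Fintype n] [CommRing R] (A : Matrix m n R) :
    (-A).rank = A.rank := by
  have h : (-A).mulVecLin = -A.mulVecLin := by ext; simp
  rw [Matrix.rank, h, LinearMap.range_neg, Matrix.rank]

theorem matrix_rank_sub_comm {m n R : Type*} [Fintype n] [CommRing R] (A B : Matrix m n R) :
    (A - B).rank = (B - A).rank := by
  rw [← neg_sub, matrix_rank_neg]

section WeightedLists

variable {R X M : Type*} [Semiring R] [AddCommMonoid M] [Module R M]

/-- The sum `∑ μᵢ f(xᵢ)` over a list of weighted points `(μᵢ, xᵢ)`. Taking `f = id` gives the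
barycenter when the weights have sum one. -/
def weightedSum (f : X → M) (L : List (R × X)) : M :=
  (L.map fun p => p.1 • f p.2).sum

/-- The sum of the weights of a list of weighted points. -/
def totalWeight (L : List (R × X)) : R :=
  (L.map Prod.fst).sum

/-- The list of weighted points with all weights multiplied by `c`. -/
def scaleWeights (c : R) (L : List (R × X)) : List (R × X) :=
  L.map fun p => (c * p.1, p.2)

theorem weightedSum_append (f : X → M) (L L' : List (R × X)) :
    weightedSum f (L ++ L') = weightedSum f L + weightedSum f L' := by
  simp [weightedSum]

theorem totalWeight_append (L L' : List (R × X)) :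
    totalWeight (L ++ L') = totalWeight L + totalWeight L' := by
  simp [totalWeight]

theorem weightedSum_cons (f : X → M) (p : R × X) (L : List (R × X)) :
    weightedSum f (p :: L) = p.1 • f p.2 + weightedSum f L := by
  simp [weightedSum]

theorem totalWeight_cons (p : R × X) (L : List (R × X)) :
    totalWeight (p :: L) = p.1 + totalWeight L := by
  simp [totalWeight]

theorem weightedSum_singleton (f : X → M) (p : R × X) : weightedSum f [p] = p.1 • f p.2 := by
  simp [weightedSum]

theorem totalWeight_singleton (p : R × X) : totalWeight [p] = p.1 := by
  simp [totalWeight]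

theorem weightedSum_perm (f : X → M) {L L' : List (R × X)} (h : L.Perm L') :
    weightedSum f L = weightedSum f L' :=
  (h.map _).sum_eq

theorem totalWeight_perm {L L' : List (R × X)} (h : L.Perm L') :
    totalWeight L = totalWeight L' :=
  (h.map _).sum_eq

theorem weightedSum_scaleWeights (f : X → M) (c : R) (L : List (R × X)) :
    weightedSum f (scaleWeights c L) = c • weightedSum f L := by
  simp [weightedSum, scaleWeights, List.smul_sum, mul_smul, Function.comp_def]

theorem totalWeight_scaleWeights (c : R) (L : List (R × X)) :
    totalWeight (scaleWeights c L) = c * totalWeight L := by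
  simp [totalWeight, scaleWeights, ← List.sum_map_mul_left, Function.comp_def]

theorem weightedSum_ofFn (f : X → M) {I : ℕ} (μ : Fin I → R) (x : Fin I → X) :
    weightedSum f (List.ofFn fun i => (μ i, x i)) = ∑ i, μ i • f (x i) := by
  simp [weightedSum, List.sum_ofFn]

theorem totalWeight_ofFn {I : ℕ} (μ : Fin I → R) (x : Fin I → X) :
    totalWeight (List.ofFn fun i => (μ i, x i)) = ∑ i, μ i := by
  simp [totalWeight, List.sum_ofFn]

theorem scaleWeights_pos [PartialOrder R] [PosMulStrictMono R] {c : R} (hc : 0 < c)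
    {L : List (R × X)} (hL : ∀ p ∈ L, 0 < p.1) : ∀ p ∈ scaleWeights c L, 0 < p.1 :=
  List.forall_mem_map.2 fun p hp => mul_pos hc (hL p hp)

theorem totalWeight_mul_le_weightedSum [PartialOrder R] [IsOrderedRing R] {f : X → R} {c : R}
    {L : List (R × X)} (hL : ∀ p ∈ L, 0 ≤ p.1) (hf : ∀ p ∈ L, c ≤ f p.2) :
    totalWeight L * c ≤ weightedSum f L := by
  rw [totalWeight, ← List.sum_map_mul_right]
  exact List.sum_le_sum fun p hp => mul_le_mul_of_nonneg_left (hf p hp) (hL p hp)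

end WeightedLists

section Laminates

open scoped Pointwise

variable {N n : ℕ} {U : Set (Mat N n)}

namespace HIProp

variable {L L' R : List (ℝ × Mat N n)}

theorem mem (h : HIProp U L) : ∀ p ∈ L, p.2 ∈ U := by
  induction h with
  | single l ξ hξ => simpa using hξ
  | pair l₁ l₂ ξ₁ ξ₂ h₁ h₂ => simpa using ⟨h₁, h₂⟩
  | step L rest l₁ l₂ ξ₁ ξ₂ hperm _ h₁ h₂ _ _ ih =>
    intro p hp
    rcases List.mem_cons.1 (hperm.mem_iff.1 hp) with rfl | hp
    · exact h₁
    rcases List.mem_cons.1 hp with rfl | hp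
    · exact h₂
    exact ih p (List.mem_cons_of_mem _ hp)

theorem perm (h : HIProp U L) (hp : L'.Perm L) : HIProp U L' := by
  cases h with
  | single l ξ hξ =>
    rw [List.perm_singleton.1 hp]
    exact single l ξ hξ
  | pair l₁ l₂ ξ₁ ξ₂ h₁ h₂ hrank =>
    rcases List.perm_pair.1 hp with rfl | rfl
    · exact pair l₁ l₂ ξ₁ ξ₂ h₁ h₂ hrank
    · exact pair l₂ l₁ ξ₂ ξ₁ h₂ h₁ (matrix_rank_sub_comm ξ₁ ξ₂ ▸ hrank)
  | step _ rest l₁ l₂ ξ₁ ξ₂ hperm hrest h₁ h₂ hrank hrec =>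
    exact step _ rest l₁ l₂ ξ₁ ξ₂ (hp.trans hperm) hrest h₁ h₂ hrank hrec

theorem scale (h : HIProp U L) {c : ℝ} (hc : c ≠ 0) : HIProp U (scaleWeights c L) := by
  induction h with
  | single l ξ hξ => exact single _ _ hξ
  | pair l₁ l₂ ξ₁ ξ₂ h₁ h₂ hrank => exact pair _ _ _ _ h₁ h₂ hrank
  | step L rest l₁ l₂ ξ₁ ξ₂ hperm hrest h₁ h₂ hrank _ ih =>
    refine step _ (scaleWeights c rest) (c * l₁) (c * l₂) ξ₁ ξ₂ (hperm.map _)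
      (by simpa [scaleWeights] using hrest) h₁ h₂ hrank ?_
    have barycenter_eq : (c * l₁ + c * l₂)⁻¹ • ((c * l₁) • ξ₁ + (c * l₂) • ξ₂) =
        (l₁ + l₂)⁻¹ • (l₁ • ξ₁ + l₂ • ξ₂) := by
      rw [mul_smul, mul_smul, ← smul_add, ← mul_add, mul_inv_rev, mul_smul,
        inv_smul_smul₀ hc]
    rw [barycenter_eq, ← mul_add]
    exact ih

theorem append {ξ : Mat N n} (h : HIProp U L) (hpos : ∀ p ∈ L, 0 < p.1)
    (hξ : weightedSum id L = totalWeight L • ξ) (hR : HIProp U ((totalWeight L, ξ) :: R)) :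
    HIProp U (L ++ R) := by
  induction h with
  | single l η _ =>
    rw [totalWeight_singleton] at hξ hR
    rw [weightedSum_singleton] at hξ
    have hηξ : η = ξ := smul_right_injective _ (hpos (l, η) (by simp)).ne' hξ
    rw [hηξ]
    exact hR
  | pair l₁ l₂ ξ₁ ξ₂ h₁ h₂ hrank =>
    rcases eq_or_ne R [] with rfl | hne
    · exact pair l₁ l₂ ξ₁ ξ₂ h₁ h₂ hrank
    rw [totalWeight_cons, totalWeight_singleton] at hξ hR
    rw [weightedSum_cons, weightedSum_singleton] at hξ
    have hl : l₁ + l₂ ≠ 0 := (add_pos (hpos (l₁, ξ₁) (by simp)) (hpos (l₂, ξ₂) (by simp))).ne'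
    refine step _ R l₁ l₂ ξ₁ ξ₂ (.refl _) hne h₁ h₂ hrank ?_
    rwa [show l₁ • ξ₁ + l₂ • ξ₂ = (l₁ + l₂) • ξ from hξ, inv_smul_smul₀ hl]
  | step L rest l₁ l₂ ξ₁ ξ₂ hperm hrest h₁ h₂ hrank _ ih =>
    obtain ⟨hl₁, hl₂, hrest_pos⟩ : 0 < l₁ ∧ 0 < l₂ ∧ ∀ p ∈ rest, 0 < p.1 := by
      simpa only [hperm.mem_iff, List.forall_mem_cons] using hpos
    have hl : l₁ + l₂ ≠ 0 := (add_pos hl₁ hl₂).ne'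
    set η := (l₁ + l₂)⁻¹ • (l₁ • ξ₁ + l₂ • ξ₂) with hη
    have weight_eq : totalWeight L = totalWeight ((l₁ + l₂, η) :: rest) := by
      simp only [totalWeight_perm hperm, totalWeight_cons, add_assoc]
    have moment_eq : weightedSum id L = weightedSum id ((l₁ + l₂, η) :: rest) := by
      simp only [weightedSum_perm id hperm, weightedSum_cons, id, hη, smul_inv_smul₀ hl, add_assoc]
    refine step _ (rest ++ R) l₁ l₂ ξ₁ ξ₂ (hperm.append_right R) (by simp [hrest])
      h₁ h₂ hrank (ih ?_ ?_ ?_)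
    · exact List.forall_mem_cons.2 ⟨add_pos hl₁ hl₂, hrest_pos⟩
    · rwa [← weight_eq, ← moment_eq]
    · rwa [← weight_eq]

end HIProp

/-- A list of weighted matrices with positive weights of sum one and barycenter `ξ` that satisfies
`(H_I(U))`: the competitors in the definition of the laminate envelope at `ξ`. -/
structure IsLaminate (U : Set (Mat N n)) (ξ : Mat N n) (L : List (ℝ × Mat N n)) : Prop where
  weight_pos : ∀ p ∈ L, 0 < p.1
  totalWeight_eq_one : totalWeight L = 1
  hiProp : HIProp U L
  barycenter_eq : weightedSum id L = ξ

namespace IsLaminate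

variable {A B ξ : Mat N n} {K L R : List (ℝ × Mat N n)} {f : Mat N n → ℝ} {c s t : ℝ}

theorem singleton (hξ : ξ ∈ U) : IsLaminate U ξ [(1, ξ)] where
  weight_pos := by simp
  totalWeight_eq_one := totalWeight_singleton _
  hiProp := .single 1 ξ hξ
  barycenter_eq := by rw [weightedSum_singleton, one_smul, id]

theorem le_weightedSum (h : IsLaminate U ξ L) (hf : ∀ η ∈ U, c ≤ f η) : c ≤ weightedSum f L := by
  simpa only [h.totalWeight_eq_one, one_mul] using
    totalWeight_mul_le_weightedSum (fun p hp => (h.weight_pos p hp).le)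
      fun p hp => hf p.2 (h.hiProp.mem p hp)

theorem hiProp_scaleWeights_append (h : IsLaminate U ξ L) (hs : 0 < s)
    (hR : HIProp U ((s, ξ) :: R)) : HIProp U (scaleWeights s L ++ R) := by
  have weight_eq : totalWeight (scaleWeights s L) = s := by
    rw [totalWeight_scaleWeights, h.totalWeight_eq_one, mul_one]
  refine (h.hiProp.scale hs.ne').append (ξ := ξ) (scaleWeights_pos hs h.weight_pos) ?_ ?_
  · rw [weightedSum_scaleWeights, h.barycenter_eq, weight_eq]
  · rwa [weight_eq]

theorem convexCombination (hK : IsLaminate U A K) (hL : IsLaminate U B L) (hA : A ∈ U)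
    (hB : B ∈ U) (hAB : (A - B).rank = 1) (hs : 0 < s) (ht : 0 < t) (hst : s + t = 1) :
    IsLaminate U (s • A + t • B) (scaleWeights s K ++ scaleWeights t L) where
  weight_pos := List.forall_mem_append.2
    ⟨scaleWeights_pos hs hK.weight_pos, scaleWeights_pos ht hL.weight_pos⟩
  totalWeight_eq_one := by
    rw [totalWeight_append, totalWeight_scaleWeights, totalWeight_scaleWeights,
      hK.totalWeight_eq_one, hL.totalWeight_eq_one, mul_one, mul_one, hst]
  hiProp := by
    have hBA : HIProp U [(t, B), (s, A)] := .pair t s B A hB hA (matrix_rank_sub_comm A B ▸ hAB)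
    have hLA : HIProp U (scaleWeights t L ++ [(s, A)]) := hL.hiProp_scaleWeights_append ht hBA
    exact hK.hiProp_scaleWeights_append hs (hLA.perm (List.perm_append_singleton _ _).symm)
  barycenter_eq := by
    rw [weightedSum_append, weightedSum_scaleWeights, weightedSum_scaleWeights,
      hK.barycenter_eq, hL.barycenter_eq]

end IsLaminate

/-- The averages `∑ μᵢ f(ηᵢ)` over the finite families of barycenter `η` satisfying `(H_I(U))`. -/
def laminateAverages (U : Set (Mat N n)) (f : Mat N n → ℝ) (η : Mat N n) : Set ℝ :=
  {r : ℝ | ∃ (I : ℕ) (μ : Fin I → ℝ) (ηs : Fin I → Mat N n),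
    (∀ i, 0 < μ i) ∧ ∑ i, μ i = 1 ∧ SatisfiesH U I μ ηs ∧
    η = ∑ i, μ i • ηs i ∧ r = ∑ i, μ i * f (ηs i)}

/-- The infimum of the averages of `f` over laminates with a given barycenter. With `f` the distance
to `E` this is the function `g` of the theorem. -/
noncomputable def laminateEnvelope (U : Set (Mat N n)) (f : Mat N n → ℝ) (η : Mat N n) : ℝ :=
  sInf (laminateAverages U f η)

section Envelope

variable {f : Mat N n → ℝ} {A B η : Mat N n} {c r s t : ℝ}

theorem mem_laminateAverages_iff :
    r ∈ laminateAverages U f η ↔ ∃ L, IsLaminate U η L ∧ weightedSum f L = r := by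
  constructor
  · rintro ⟨I, μ, ηs, hpos, hsum, hH, rfl, rfl⟩
    exact ⟨List.ofFn fun i => (μ i, ηs i),
      ⟨List.forall_mem_ofFn_iff.2 hpos, (totalWeight_ofFn μ ηs).trans hsum, hH,
        weightedSum_ofFn id μ ηs⟩,
      weightedSum_ofFn f μ ηs⟩
  · rintro ⟨L, ⟨hpos, hsum, hH, hη⟩, hr⟩
    obtain ⟨I, a, rfl⟩ : ∃ (I : ℕ) (a : Fin I → ℝ × Mat N n), List.ofFn a = L :=
      ⟨L.length, L.get, List.ofFn_get L⟩
    exact ⟨I, fun i => (a i).1, fun i => (a i).2,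
      fun i => hpos (a i) (List.mem_ofFn.2 ⟨i, rfl⟩),
      (totalWeight_ofFn _ _).symm.trans hsum, hH, hη.symm.trans (weightedSum_ofFn _ _ _),
      hr.symm.trans (weightedSum_ofFn _ _ _)⟩

theorem self_mem_laminateAverages (hη : η ∈ U) : f η ∈ laminateAverages U f η :=
  mem_laminateAverages_iff.2
    ⟨_, .singleton hη, by rw [weightedSum_singleton, one_smul]⟩

theorem mem_lowerBounds_laminateAverages (hf : ∀ ξ ∈ U, c ≤ f ξ) (η : Mat N n) :
    c ∈ lowerBounds (laminateAverages U f η) := by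
  intro r hr
  obtain ⟨L, hL, rfl⟩ := mem_laminateAverages_iff.1 hr
  exact hL.le_weightedSum hf

theorem smul_laminateAverages_add_subset (hA : A ∈ U) (hB : B ∈ U) (hAB : (A - B).rank = 1)
    (hs : 0 < s) (ht : 0 < t) (hst : s + t = 1) :
    s • laminateAverages U f A + t • laminateAverages U f B ⊆
      laminateAverages U f (s • A + t • B) := by
  rintro _ ⟨_, ⟨a, ha, rfl⟩, _, ⟨b, hb, rfl⟩, rfl⟩
  obtain ⟨K, hK, rfl⟩ := mem_laminateAverages_iff.1 ha
  obtain ⟨L, hL, rfl⟩ := mem_laminateAverages_iff.1 hb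
  refine mem_laminateAverages_iff.2 ⟨_, hK.convexCombination hL hA hB hAB hs ht hst, ?_⟩
  rw [weightedSum_append, weightedSum_scaleWeights, weightedSum_scaleWeights]

theorem le_laminateEnvelope (hf : ∀ ξ ∈ U, c ≤ f ξ) (hη : η ∈ U) : c ≤ laminateEnvelope U f η :=
  le_csInf ⟨_, self_mem_laminateAverages hη⟩ (mem_lowerBounds_laminateAverages hf η)

theorem laminateEnvelope_le (hf : ∀ ξ ∈ U, c ≤ f ξ) (hη : η ∈ U) : laminateEnvelope U f η ≤ f η :=
  csInf_le ⟨c, mem_lowerBounds_laminateAverages hf η⟩ (self_mem_laminateAverages hη)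

theorem laminateEnvelope_convexCombination_le (hf : ∀ ξ ∈ U, c ≤ f ξ) (hA : A ∈ U) (hB : B ∈ U)
    (hAB : (A - B).rank = 1) (hs : 0 ≤ s) (ht : 0 ≤ t) (hst : s + t = 1) :
    laminateEnvelope U f (s • A + t • B) ≤
      s * laminateEnvelope U f A + t * laminateEnvelope U f B := by
  rcases hs.eq_or_lt with rfl | hs'
  · obtain rfl : t = 1 := by simpa using hst
    simp
  rcases ht.eq_or_lt with rfl | ht'
  · obtain rfl : s = 1 := by simpa using hst
    simp
  have nonempty_A : (s • laminateAverages U f A).Nonempty :=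
    Set.Nonempty.smul_set ⟨_, self_mem_laminateAverages hA⟩
  have nonempty_B : (t • laminateAverages U f B).Nonempty :=
    Set.Nonempty.smul_set ⟨_, self_mem_laminateAverages hB⟩
  have bddBelow (η : Mat N n) : BddBelow (laminateAverages U f η) :=
    ⟨c, mem_lowerBounds_laminateAverages hf η⟩
  calc sInf (laminateAverages U f (s • A + t • B))
      ≤ sInf (s • laminateAverages U f A + t • laminateAverages U f B) :=
        csInf_le_csInf (bddBelow _) (nonempty_A.add nonempty_B)
          (smul_laminateAverages_add_subset hA hB hAB hs' ht' hst)
    _ = sInf (s • laminateAverages U f A) + sInf (t • laminateAverages U f B) :=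
        csInf_add nonempty_A ((bddBelow A).smul_of_nonneg hs)
          nonempty_B ((bddBelow B).smul_of_nonneg ht)
    _ = s * sInf (laminateAverages U f A) + t * sInf (laminateAverages U f B) := by
        rw [Real.sInf_smul_of_nonneg hs, Real.sInf_smul_of_nonneg ht, smul_eq_mul, smul_eq_mul]

end Envelope

theorem stmt19_general {f : Mat N n → ℝ} {c : ℝ} (hf : ∀ ξ ∈ U, c ≤ f ξ) :
    (∀ η ∈ U, (laminateAverages U f η).Nonempty ∧ c ≤ laminateEnvelope U f η) ∧
    (∀ η ∈ U, f η = c → laminateEnvelope U f η = c) ∧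
    (∀ A ∈ U, ∀ B ∈ U, (A - B).rank = 1 → ∀ t ∈ Set.Icc (0 : ℝ) 1,
      laminateEnvelope U f (t • A + (1 - t) • B) ≤
        t * laminateEnvelope U f A + (1 - t) * laminateEnvelope U f B) :=
  ⟨fun _ hη => ⟨⟨_, self_mem_laminateAverages hη⟩, le_laminateEnvelope hf hη⟩,
    fun _ hη hfη => ((laminateEnvelope_le hf hη).trans_eq hfη).antisymm (le_laminateEnvelope hf hη),
    fun _ hA _ hB hAB _ ht => laminateEnvelope_convexCombination_le hf hA hB hAB ht.1
      (sub_nonneg.2 ht.2) (add_sub_cancel _ _)⟩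

end Laminates

theorem stmt19 {N n : ℕ} (E : Set (Mat N n)) (hE : IsCompact E)
    (U : Set (Mat N n)) (hUo : IsOpen U) (hUb : Bornology.IsBounded U) (hEU : E ⊆ U)
    (g : Mat N n → ℝ)
    (hg : ∀ η, g η = sInf {r : ℝ | ∃ (I : ℕ) (μ : Fin I → ℝ) (ηs : Fin I → Mat N n),
      (∀ i, 0 < μ i) ∧ ∑ i, μ i = 1 ∧ SatisfiesH U I μ ηs ∧
      η = ∑ i, μ i • ηs i ∧ r = ∑ i, μ i * Metric.infDist (ηs i) E}) :
    (∀ η ∈ U,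
      {r : ℝ | ∃ (I : ℕ) (μ : Fin I → ℝ) (ηs : Fin I → Mat N n),
        (∀ i, 0 < μ i) ∧ ∑ i, μ i = 1 ∧ SatisfiesH U I μ ηs ∧
        η = ∑ i, μ i • ηs i ∧ r = ∑ i, μ i * Metric.infDist (ηs i) E}.Nonempty ∧
      0 ≤ g η) ∧
    (∀ η ∈ E, g η = 0) ∧
    (∀ A ∈ U, ∀ B ∈ U, (A - B).rank = 1 →
      (∀ t ∈ Set.Ioo (0:ℝ) 1, t • A + (1 - t) • B ∈ U) →
      ∀ t ∈ Set.Icc (0:ℝ) 1, g (t • A + (1 - t) • B) ≤ t * g A + (1 - t) * g B) := by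
  obtain rfl : g = laminateEnvelope U (infDist · E) := funext hg
  obtain ⟨hbound, hmin, hconv⟩ := stmt19_general (U := U) (f := (infDist · E))
    fun _ _ => infDist_nonneg
  exact ⟨hbound, fun η hη => hmin η (hEU hη) (infDist_zero_of_mem hη),
    fun A hA B hB hAB _ => hconv A hA B hB hAB⟩

end Statements
end
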